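/- Let n ≥ 2, let 1 ≤ k ≤ n−1, and let f₁, f₂ ∈ Q₀ⁿ. Assume the Shephard condition: ‖P_H f₁‖_{L¹(H)} ≤ ‖P_H f₂‖_{L¹(H)} for every k-dimensional linear subspace H ⊆ ℝⁿ. Then ‖f₁‖_{n/k} ≤ (16·e·√n)^{n−k} · ‖f₂‖_{n/k}. -/

import Mathlib

open MeasureTheory

noncomputable section

/-- `ℝⁿ` with its Euclidean structure. -/
abbrev Eucl (n : ℕ) := EuclideanSpace ℝ (Fin n)

/-- `f : ℝⁿ → [0,∞)` is log-concave:
`f(tx+(1−t)y) ≥ f(x)^t · f(y)^(1−t)` for all `x, y` and `t ∈ (0,1)`. -/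
def IsLogConcave {n : ℕ} (f : Eucl n → ℝ) : Prop :=
  ∀ x y : Eucl n, ∀ t : ℝ, 0 < t → t < 1 →
    f x ^ t * f y ^ (1 - t) ≤ f (t • x + (1 - t) • y)

/-- The class `Q₀ⁿ`: nonnegative, log-concave, upper semicontinuous, integrable
functions with positive integral. -/
def MemQ0 {n : ℕ} (f : Eucl n → ℝ) : Prop :=
  (∀ x, 0 ≤ f x) ∧ IsLogConcave f ∧ UpperSemicontinuous f ∧
    Integrable f ∧ 0 < ∫ x, f x

/-- `‖f‖_∞ = sup f`. -/
def supNorm {n : ℕ} (f : Eucl n → ℝ) : ℝ := ⨆ x, f x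

/-- `‖f‖_p = (∫ f^p)^(1/p)`. -/
def lpNorm {n : ℕ} (p : ℝ) (f : Eucl n → ℝ) : ℝ := (∫ x, f x ^ p) ^ (1 / p)

/-- `‖P_H f‖_{L¹(H)} = ∫_H sup_{z ∈ H⊥} f(y+z) dλ_H(y)`, the `L¹(H)`-norm of the
projection of `f` onto the subspace `H` (with the Lebesgue measure on `H` induced
by the Euclidean structure). -/
def projL1 {n : ℕ} (f : Eucl n → ℝ) (H : Submodule ℝ (Eucl n)) : ℝ :=
  ∫ y : H, ⨆ z : Hᗮ, f ((y : Eucl n) + (z : Eucl n))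

/-- `‖S_H f‖_{L¹(H)} = ∫_H f dλ_H`, the integral of the section `f|_H`. -/
def sectL1 {n : ℕ} (f : Eucl n → ℝ) (H : Submodule ℝ (Eucl n)) : ℝ :=
  ∫ y : H, f (y : Eucl n)

/-!
A linear change of coordinates puts `f₂` in a normalized position. If every simplex with vertices
in a superlevel set of the log-concave function `h = f₂ ^ (n / k)` had small volume, then the
second-moment identity for random determinants would bound the volumes of all superlevel sets, and
the layer-cake formula would bound `∫ h` by less than itself. Hence some superlevel set
`{τ ≤ h}` contains a large simplex; the parallelepiped inscribed in it becomes a unit cube on which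
`h ≥ τ`, while `∫ h ≤ (16 √n) ^ n τ`.

In these coordinates only the projections to the coordinate subspaces of dimension `k` matter.
Finner's inequality and the inequality of arithmetic and geometric means bound `‖f₁‖_{n/k}` by
the average of the integrals of these projections, which by assumption does not decrease if `f₁`
is replaced by `f₂`. Conversely, the sum of these integrals for `f₂`, times `t ^ (n - k)`, is at
most the integral of the supremum of `f₂` over the translates of a box of side `t`, and
log-concavity compares this supremum with `f₂ ^ (n / k)`, because `f₂` is bounded below on the cube.
-/

open scoped ENNReal
open Set (Icc Ico Ici Iio)

section HaarMeasure

variable {E E' : Type*} [NormedAddCommGroup E] [NormedSpace ℝ E]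
  [MeasurableSpace E] [BorelSpace E] (μ : Measure E) [μ.IsAddHaarMeasure]
  [NormedAddCommGroup E'] [NormedSpace ℝ E'] [FiniteDimensional ℝ E']
  [MeasurableSpace E'] [BorelSpace E'] (ν : Measure E') [ν.IsAddHaarMeasure]

lemma lintegral_comp_smul_add [FiniteDimensional ℝ E] (F : E → ℝ≥0∞) {c : ℝ} (hc : 0 < c) (v : E) :
    ∫⁻ x, F (c • x + v) ∂μ =
      ENNReal.ofReal ((c ^ Module.finrank ℝ E)⁻¹) * ∫⁻ x, F x ∂μ := by
  have hmap : ∫⁻ y, F (y + v) ∂(μ.map (c • ·)) = ∫⁻ x, F (c • x + v) ∂μ :=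
    (Homeomorph.smulOfNeZero c hc.ne').measurableEmbedding.lintegral_map fun y => F (y + v)
  rw [← hmap, Measure.map_addHaar_smul _ hc.ne', lintegral_smul_measure,
    lintegral_add_right_eq_self F v, abs_of_pos (by positivity), smul_eq_mul]

lemma exists_lintegral_comp_continuousLinearEquiv (A : E ≃L[ℝ] E') :
    ∃ d : ℝ≥0∞, d ≠ 0 ∧ d ≠ ∞ ∧ ∀ F : E' → ℝ≥0∞, ∫⁻ x, F (A x) ∂μ = d * ∫⁻ y, F y ∂ν := by
  have := A.isAddHaarMeasure_map μ
  refine ⟨Measure.addHaarScalarFactor (μ.map A) ν, ?_, ENNReal.coe_ne_top, fun F => ?_⟩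
  · exact ENNReal.coe_ne_zero.2 (Measure.addHaarScalarFactor_pos_of_isAddHaarMeasure _ _).ne'
  · have hmap : ∫⁻ y, F y ∂(μ.map A) = ∫⁻ x, F (A x) ∂μ :=
      A.toHomeomorph.measurableEmbedding.lintegral_map F
    rw [← hmap]
    conv_lhs => rw [Measure.isAddLeftInvariant_eq_smul (μ.map A) ν]
    rw [lintegral_smul_measure, ENNReal.smul_def, smul_eq_mul]

end HaarMeasure

/-- Log-concavity of a `[0, ∞]`-valued function on a real vector space. -/
def ELogConcave {E : Type*} [AddCommGroup E] [Module ℝ E] (F : E → ℝ≥0∞) : Prop :=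
  ∀ x y (a b : ℝ), 0 < a → 0 < b → a + b = 1 → F x ^ a * F y ^ b ≤ F (a • x + b • y)

namespace ELogConcave

section Module

variable {E E' : Type*} [AddCommGroup E] [Module ℝ E] [AddCommGroup E'] [Module ℝ E']
  {F : E → ℝ≥0∞}

lemma convex_setOf_le (hF : ELogConcave F) (c : ℝ≥0∞) : Convex ℝ {x | c ≤ F x} := by
  rw [convex_iff_forall_pos]
  intro x hx y hy a b ha hb hab
  calc c = c ^ a * c ^ b := by
        rw [← ENNReal.rpow_add_of_nonneg _ _ ha.le hb.le, hab, ENNReal.rpow_one]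
    _ ≤ F x ^ a * F y ^ b := by gcongr <;> assumption
    _ ≤ F (a • x + b • y) := hF x y a b ha hb hab

lemma rpow (hF : ELogConcave F) {p : ℝ} (hp : 0 ≤ p) : ELogConcave fun x => F x ^ p := by
  intro x y a b ha hb hab
  calc (F x ^ p) ^ a * (F y ^ p) ^ b = (F x ^ a * F y ^ b) ^ p := by
        simp only [ENNReal.mul_rpow_of_nonneg _ _ hp, ← ENNReal.rpow_mul, mul_comm]
    _ ≤ F (a • x + b • y) ^ p := by gcongr; exact hF x y a b ha hb hab

lemma comp_linearMap (hF : ELogConcave F) (L : E' →ₗ[ℝ] E) : ELogConcave fun x => F (L x) := by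
  intro x y a b ha hb hab
  simpa only [map_add, map_smul] using hF (L x) (L y) a b ha hb hab

end Module

variable {E : Type*} [NormedAddCommGroup E] [NormedSpace ℝ E] [FiniteDimensional ℝ E]
  [MeasurableSpace E] [BorelSpace E] {μ : Measure E} [μ.IsAddHaarMeasure] {F : E → ℝ≥0∞}

lemma rpow_mul_lintegral_rpow_le (hF : ELogConcave F) (hm : Measurable F) {a b : ℝ} (ha : 0 < a)
    (hb : 0 < b) (hab : a + b = 1) (x : E) :
    F x ^ a * ∫⁻ y, F y ^ b ∂μ ≤
      ENNReal.ofReal ((b ^ Module.finrank ℝ E)⁻¹) * ∫⁻ y, F y ∂μ := by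
  rw [← lintegral_const_mul _ (hm.pow_const b), ← lintegral_comp_smul_add μ F hb (a • x)]
  refine lintegral_mono fun y => ?_
  rw [add_comm (b • y)]
  exact hF x y a b ha hb hab

lemma exists_forall_le (hF : ELogConcave F) (hm : Measurable F) (h0 : ∫⁻ x, F x ∂μ ≠ 0)
    (hfin : ∫⁻ x, F x ∂μ ≠ ∞) : ∃ M : ℝ≥0∞, M ≠ ∞ ∧ ∀ x, F x ≤ M := by
  have hhalf : ∫⁻ y, F y ^ (1 / 2 : ℝ) ∂μ ≠ 0 := by
    rw [Ne, lintegral_eq_zero_iff (hm.pow_const _)]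
    refine fun h => h0 ((lintegral_eq_zero_iff hm).2 (h.mono fun y hy => ?_))
    exact (ENNReal.rpow_eq_zero_iff_of_pos (by norm_num)).1 hy
  set c := ENNReal.ofReal (((1 / 2 : ℝ) ^ Module.finrank ℝ E)⁻¹) * ∫⁻ y, F y ∂μ
  have hc : c ≠ ∞ := ENNReal.mul_ne_top ENNReal.ofReal_ne_top hfin
  refine ⟨(c / ∫⁻ y, F y ^ (1 / 2 : ℝ) ∂μ) ^ (2 : ℝ),
    ENNReal.rpow_ne_top_of_nonneg zero_le_two (ENNReal.div_ne_top hc hhalf), fun x => ?_⟩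
  rw [← ENNReal.rpow_inv_le_iff two_pos, ENNReal.le_div_iff_mul_le (.inl hhalf) (.inr hc)]
  rw [← one_div]
  exact hF.rpow_mul_lintegral_rpow_le hm (by norm_num) (by norm_num) (by norm_num) x

lemma exists_ball_le (hF : ELogConcave F) (hm : Measurable F) (h0 : ∫⁻ x, F x ∂μ ≠ 0) :
    ∃ (x₀ : E) (r : ℝ) (δ : ℝ≥0∞), 0 < r ∧ δ ≠ 0 ∧ δ ≠ ∞ ∧ ∀ x ∈ Metric.ball x₀ r, δ ≤ F x := by
  have hsupp : μ (⋃ m : ℕ, {x | ((m : ℝ≥0∞) + 1)⁻¹ ≤ F x}) ≠ 0 := by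
    refine fun h => h0 ((lintegral_eq_zero_iff hm).2 (measure_mono_null (fun x hx => ?_) h))
    obtain ⟨m, hmx⟩ := ENNReal.exists_inv_nat_lt hx
    exact Set.mem_iUnion.2 ⟨m, (ENNReal.inv_le_inv.2 le_self_add).trans hmx.le⟩
  obtain ⟨m, hpos⟩ := exists_measure_pos_of_not_measure_iUnion_null hsupp
  set S := {x | ((m : ℝ≥0∞) + 1)⁻¹ ≤ F x}
  have hS : Convex ℝ S := hF.convex_setOf_le _
  have hint : (interior S).Nonempty := by
    rw [Set.nonempty_iff_ne_empty]
    refine fun hempty => hpos.ne' (measure_mono_null ?_ (hS.addHaar_frontier μ))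
    rw [frontier, hempty, Set.sdiff_empty]
    exact subset_closure
  obtain ⟨x₀, hx₀⟩ := hint
  obtain ⟨r, hr, hball⟩ := Metric.isOpen_iff.1 isOpen_interior x₀ hx₀
  exact ⟨x₀, r, ((m : ℝ≥0∞) + 1)⁻¹, hr, by simp, by simp, fun x hx =>
    show x ∈ S from interior_subset (hball hx)⟩

end ELogConcave

/-- The class `Q₀` for `[0, ∞]`-valued functions on a finite-dimensional space. -/
structure MemEQ0 {E : Type*} [NormedAddCommGroup E] [NormedSpace ℝ E] [MeasureSpace E]
    (F : E → ℝ≥0∞) : Prop where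
  logConcave : ELogConcave F
  upperSemicontinuous : UpperSemicontinuous F
  lintegral_ne_zero : ∫⁻ x, F x ≠ 0
  lintegral_ne_top : ∫⁻ x, F x ≠ ∞

namespace MemEQ0

variable {E E' : Type*} [NormedAddCommGroup E] [NormedSpace ℝ E] [MeasureSpace E] [BorelSpace E]
  {F : E → ℝ≥0∞}

lemma measurable (hF : MemEQ0 F) : Measurable F := hF.upperSemicontinuous.measurable

variable [FiniteDimensional ℝ E] [(volume : Measure E).IsAddHaarMeasure]

lemma exists_forall_le (hF : MemEQ0 F) : ∃ M : ℝ≥0∞, M ≠ ∞ ∧ ∀ x, F x ≤ M :=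
  hF.logConcave.exists_forall_le hF.measurable hF.lintegral_ne_zero hF.lintegral_ne_top

lemma comp_continuousLinearEquiv [NormedAddCommGroup E'] [NormedSpace ℝ E']
    [FiniteDimensional ℝ E'] [MeasureSpace E'] [BorelSpace E']
    [(volume : Measure E').IsAddHaarMeasure] (hF : MemEQ0 F) (A : E' ≃L[ℝ] E) :
    MemEQ0 fun x => F (A x) := by
  obtain ⟨d, hd0, hdtop, hd⟩ := exists_lintegral_comp_continuousLinearEquiv volume volume A
  exact ⟨hF.logConcave.comp_linearMap A.toLinearEquiv.toLinearMap,
    hF.upperSemicontinuous.comp A.continuous, by simp [hd, hd0, hF.lintegral_ne_zero],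
    by simpa [hd] using ENNReal.mul_ne_top hdtop hF.lintegral_ne_top⟩

lemma rpow (hF : MemEQ0 F) {p : ℝ} (hp : 1 ≤ p) : MemEQ0 fun x => F x ^ p := by
  have hp0 : 0 < p := by linarith
  refine ⟨hF.logConcave.rpow hp0.le, ENNReal.continuous_rpow_const.comp_upperSemicontinuous
    hF.upperSemicontinuous (ENNReal.monotone_rpow_of_nonneg hp0.le), ?_, ?_⟩
  · rw [Ne, lintegral_eq_zero_iff (hF.measurable.pow_const p)]
    refine fun h => hF.lintegral_ne_zero
      ((lintegral_eq_zero_iff hF.measurable).2 (h.mono fun x hx => ?_))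
    simpa [ENNReal.rpow_eq_zero_iff_of_pos hp0] using hx
  · obtain ⟨M, hM, hFM⟩ := hF.exists_forall_le
    have hMp : M ^ (p - 1) ≠ ∞ := ENNReal.rpow_ne_top_of_nonneg (by linarith) hM
    refine ne_top_of_le_ne_top (ENNReal.mul_ne_top hMp hF.lintegral_ne_top) ?_
    rw [← lintegral_const_mul' _ _ hMp]
    refine lintegral_mono fun x => ?_
    calc F x ^ p = F x ^ (p - 1) * F x := by
          conv_rhs => rw [← ENNReal.rpow_one (F x), ← ENNReal.rpow_mul, one_mul]
          rw [← ENNReal.rpow_add_of_nonneg _ _ (by linarith) zero_le_one, sub_add_cancel]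
      _ ≤ M ^ (p - 1) * F x := by gcongr; exact hFM x

end MemEQ0

section LayerCake

variable {α : Type*} [MeasurableSpace α] {μ : Measure α} {F : α → ℝ≥0∞}

lemma lintegral_eq_lintegral_measure_ofReal_le (hF : Measurable F) (hfin : ∀ x, F x ≠ ∞) :
    ∫⁻ x, F x ∂μ = ∫⁻ t in Set.Ioi (0 : ℝ), μ {x | ENNReal.ofReal t ≤ F x} := by
  simp only [ENNReal.ofReal_le_iff_le_toReal (hfin _)]
  rw [← lintegral_eq_lintegral_meas_le μ (.of_forall fun x => ENNReal.toReal_nonneg)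
    hF.ennreal_toReal.aemeasurable]
  exact lintegral_congr fun x => (ENNReal.ofReal_toReal (hfin x)).symm

lemma setLIntegral_Ioc_ofReal_div {s t b : ℝ} (hs : 0 < s) (hst : s ≤ t) (hb : 0 ≤ b) :
    ∫⁻ u in Set.Ioc s t, ENNReal.ofReal (b / u) = ENNReal.ofReal (b * Real.log (t / s)) := by
  have hint : IntegrableOn (fun u => b / u) (Set.Ioc s t) := by
    refine (intervalIntegrable_iff_integrableOn_Ioc_of_le hst).1 (ContinuousOn.intervalIntegrable
      (continuousOn_const.div continuousOn_id fun u hu => ?_))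
    exact (hs.trans_le (Set.uIcc_of_le hst ▸ hu).1).ne'
  have hnonneg : 0 ≤ᵐ[volume.restrict (Set.Ioc s t)] fun u => b / u := by
    filter_upwards [ae_restrict_mem measurableSet_Ioc] with u hu
    exact div_nonneg hb (hs.trans hu.1).le
  rw [← ofReal_integral_eq_lintegral_ofReal hint hnonneg, ← intervalIntegral.integral_of_le hst]
  simp_rw [div_eq_mul_one_div b]
  rw [intervalIntegral.integral_const_mul, integral_one_div_of_pos hs (hs.trans_le hst)]

lemma lintegral_le_lintegral_min_add_of_measure_le (hF : Measurable F) {t M b : ℝ} (ht : 0 < t)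
    (htM : t ≤ M) (hb : 0 ≤ b) (hFM : ∀ x, F x ≤ ENNReal.ofReal M)
    (hlevel : ∀ u, 0 < u → μ {x | ENNReal.ofReal u ≤ F x} ≤ ENNReal.ofReal (b / u)) :
    ∫⁻ x, F x ∂μ ≤
      ∫⁻ x, min (F x) (ENNReal.ofReal t) ∂μ + ENNReal.ofReal (b * Real.log (M / t)) := by
  set level := fun u : ℝ => μ {x | ENNReal.ofReal u ≤ F x}
  have hlow : ∫⁻ u in Set.Ioc 0 t, level u ≤ ∫⁻ x, min (F x) (ENNReal.ofReal t) ∂μ := by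
    rw [lintegral_eq_lintegral_measure_ofReal_le (hF.min measurable_const) fun x =>
      ((min_le_right _ _).trans_lt ENNReal.ofReal_lt_top).ne]
    refine (setLIntegral_mono' measurableSet_Ioc fun u hu => measure_mono fun x hx => ?_).trans
      (lintegral_mono_set Set.Ioc_subset_Ioi_self)
    exact le_min hx (ENNReal.ofReal_le_ofReal hu.2)
  have hmid : ∫⁻ u in Set.Ioc t M, level u ≤ ENNReal.ofReal (b * Real.log (M / t)) := by
    rw [← setLIntegral_Ioc_ofReal_div ht htM hb]
    exact setLIntegral_mono' measurableSet_Ioc fun u hu => hlevel u (ht.trans hu.1)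
  have hhigh : ∫⁻ u in Set.Ioi M, level u = 0 := by
    refine (setLIntegral_congr_fun measurableSet_Ioi fun u hu => ?_).trans lintegral_zero
    have hempty : {x | ENNReal.ofReal u ≤ F x} = ∅ := Set.eq_empty_of_forall_notMem fun x hx =>
      hu.not_ge ((ENNReal.ofReal_le_ofReal_iff (ht.le.trans htM)).1 (hx.trans (hFM x)))
    simp only [level, hempty, measure_empty]
  calc ∫⁻ x, F x ∂μ = ∫⁻ u in Set.Ioi (0 : ℝ), level u :=
        lintegral_eq_lintegral_measure_ofReal_le hF
          fun x => ((hFM x).trans_lt ENNReal.ofReal_lt_top).ne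
    _ = ∫⁻ u in Set.Ioc 0 t ∪ (Set.Ioc t M ∪ Set.Ioi M), level u := by
        rw [Set.Ioc_union_Ioi_eq_Ioi htM, Set.Ioc_union_Ioi_eq_Ioi ht.le]
    _ ≤ (∫⁻ u in Set.Ioc 0 t, level u) +
          ((∫⁻ u in Set.Ioc t M, level u) + ∫⁻ u in Set.Ioi M, level u) :=
        (lintegral_union_le _ _ _).trans (add_le_add_right (lintegral_union_le _ _ _) _)
    _ ≤ _ := by
        rw [hhigh, add_zero]
        exact add_le_add hlow hmid

end LayerCake

lemma log_two_div_one_fourth_pow_sq_le {d : ℕ} (hd : 2 ≤ d) :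
    Real.log (2 / ((1 / 4) ^ d) ^ 2) ≤ 15 / 4 * d := by
  have hpow : (2 : ℝ) / ((1 / 4) ^ d) ^ 2 = 2 ^ (4 * d + 1) := by
    rw [div_eq_iff (by positivity), ← pow_mul, mul_comm d, pow_mul, pow_succ, pow_mul,
      mul_right_comm, ← mul_pow]
    norm_num
  have hd' : (2 : ℝ) ≤ d := by exact_mod_cast hd
  rw [hpow, Real.log_pow]
  push_cast
  nlinarith [Real.log_two_lt_d9]

lemma one_fourth_pow_mul_two_pow_le {d : ℕ} (hd : 2 ≤ d) :
    (1 / 4 : ℝ) ^ d * 2 ^ d ≤ 1 / 4 := calc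
  (1 / 4 : ℝ) ^ d * 2 ^ d = (1 / 2) ^ d := by rw [← mul_pow]; norm_num
  _ ≤ (1 / 2) ^ 2 := pow_le_pow_of_le_one (by norm_num) (by norm_num) hd
  _ = 1 / 4 := by norm_num

namespace ELogConcave

variable {E : Type*} [NormedAddCommGroup E] [NormedSpace ℝ E] [FiniteDimensional ℝ E]
  [MeasurableSpace E] [BorelSpace E] {μ : Measure E} [μ.IsAddHaarMeasure] {F : E → ℝ≥0∞}

lemma lintegral_min_le (hF : ELogConcave F) (hm : Measurable F) (s : ℝ≥0∞) (x₀ : E) :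
    ∫⁻ x, min (F x) (s ^ 2 * F x₀) ∂μ ≤ s * (2 ^ Module.finrank ℝ E * ∫⁻ x, F x ∂μ) := by
  have hmin : ∀ x, min (F x) (s ^ 2 * F x₀) ≤
      s * F x₀ ^ (1 / 2 : ℝ) * F x ^ (1 / 2 : ℝ) := fun x => calc
    min (F x) (s ^ 2 * F x₀) = min (F x) (s ^ 2 * F x₀) ^ (1 / 2 : ℝ) *
        min (F x) (s ^ 2 * F x₀) ^ (1 / 2 : ℝ) := by
      rw [← ENNReal.rpow_add_of_nonneg _ _ (by norm_num) (by norm_num), add_halves,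
        ENNReal.rpow_one]
    _ ≤ (s ^ 2 * F x₀) ^ (1 / 2 : ℝ) * F x ^ (1 / 2 : ℝ) := by
      gcongr
      · exact min_le_right _ _
      · exact min_le_left _ _
    _ = _ := by
      rw [ENNReal.mul_rpow_of_nonneg _ _ (by norm_num), ← ENNReal.rpow_natCast, ← ENNReal.rpow_mul]
      norm_num
  have hconst : ENNReal.ofReal (((1 / 2 : ℝ) ^ Module.finrank ℝ E)⁻¹) =
      2 ^ Module.finrank ℝ E := by
    rw [one_div, ← inv_pow, inv_inv, ENNReal.ofReal_pow zero_le_two, ENNReal.ofReal_ofNat]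
  calc ∫⁻ x, min (F x) (s ^ 2 * F x₀) ∂μ
      ≤ ∫⁻ x, s * F x₀ ^ (1 / 2 : ℝ) * F x ^ (1 / 2 : ℝ) ∂μ := lintegral_mono hmin
    _ = s * (F x₀ ^ (1 / 2 : ℝ) * ∫⁻ x, F x ^ (1 / 2 : ℝ) ∂μ) := by
        rw [lintegral_const_mul _ (hm.pow_const _), mul_assoc]
    _ ≤ s * (2 ^ Module.finrank ℝ E * ∫⁻ x, F x ∂μ) := by
        rw [← hconst]
        exact mul_le_mul_right (hF.rpow_mul_lintegral_rpow_le hm (by norm_num) (by norm_num)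
          (by norm_num) x₀) s

lemma exists_forall_le_two_mul (hF : ELogConcave F) (hm : Measurable F) (h0 : ∫⁻ x, F x ∂μ ≠ 0)
    (hfin : ∫⁻ x, F x ∂μ ≠ ∞) : ∃ x₀, 0 < F x₀ ∧ F x₀ ≠ ∞ ∧ ∀ x, F x ≤ 2 * F x₀ := by
  obtain ⟨M, hM, hFM⟩ := hF.exists_forall_le hm h0 hfin
  have hsup : ⨆ x, F x ≠ ∞ := ne_top_of_le_ne_top hM (iSup_le hFM)
  have hsup0 : ⨆ x, F x ≠ 0 := fun h => h0 (by simp [ENNReal.iSup_eq_zero.1 h])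
  obtain ⟨x₀, hx₀⟩ := lt_iSup_iff.1 (ENNReal.half_lt_self hsup0 hsup)
  refine ⟨x₀, pos_of_gt hx₀, ne_top_of_le_ne_top hM (hFM x₀), fun x => ?_⟩
  rw [mul_comm, ← ENNReal.div_le_iff two_ne_zero ENNReal.ofNat_ne_top]
  exact (ENNReal.div_le_div_right (le_iSup F x) 2).trans hx₀.le

lemma lintegral_le_of_measure_le (hF : ELogConcave F) (hm : Measurable F)
    (h0 : ∫⁻ x, F x ∂μ ≠ 0) (hfin : ∫⁻ x, F x ∂μ ≠ ∞) (hd : 2 ≤ Module.finrank ℝ E) {b : ℝ}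
    (hb : 0 ≤ b)
    (hlevel : ∀ t, 0 < t → μ {x | ENNReal.ofReal t ≤ F x} ≤ ENNReal.ofReal (b / t)) :
    ∫⁻ x, F x ∂μ ≤ ENNReal.ofReal (5 * Module.finrank ℝ E * b) := by
  set d := Module.finrank ℝ E
  obtain ⟨x₀, hpos, htop, hmax⟩ := hF.exists_forall_le_two_mul hm h0 hfin
  obtain ⟨a, ha, haF⟩ : ∃ a, 0 < a ∧ F x₀ = ENNReal.ofReal a :=
    ⟨(F x₀).toReal, ENNReal.toReal_pos hpos.ne' htop, (ENNReal.ofReal_toReal htop).symm⟩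
  set s : ℝ := (1 / 4) ^ d
  have hs0 : 0 < s := by positivity
  have htM : s ^ 2 * a ≤ 2 * a := by
    gcongr
    exact (pow_le_one₀ hs0.le (pow_le_one₀ (by norm_num) (by norm_num))).trans one_le_two
  have hcake := lintegral_le_lintegral_min_add_of_measure_le hm
    (show 0 < s ^ 2 * a by positivity) htM hb
    (fun x => by simpa [ENNReal.ofReal_mul, ← haF] using hmax x) hlevel
  have hmin := hF.lintegral_min_le (μ := μ) hm (ENNReal.ofReal s) x₀
  rw [haF, ← ENNReal.ofReal_pow hs0.le, ← ENNReal.ofReal_mul (by positivity)] at hmin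
  have hlog : Real.log (2 * a / (s ^ 2 * a)) ≤ 15 / 4 * d := by
    rw [mul_div_mul_right _ _ ha.ne']
    exact log_two_div_one_fourth_pow_sq_le hd
  have hquarter : ENNReal.ofReal s * 2 ^ d ≤ ENNReal.ofReal (1 / 4) := by
    rw [← ENNReal.ofReal_ofNat 2, ← ENNReal.ofReal_pow zero_le_two, ← ENNReal.ofReal_mul hs0.le]
    exact ENNReal.ofReal_le_ofReal (one_fourth_pow_mul_two_pow_le hd)
  set V := ∫⁻ x, F x ∂μ
  have hV : V ≤ ENNReal.ofReal (1 / 4) * V + ENNReal.ofReal (b * (15 / 4 * d)) := by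
    refine hcake.trans (add_le_add (hmin.trans ?_) (by gcongr))
    rw [← mul_assoc]
    gcongr
  rw [← ENNReal.ofReal_toReal hfin] at hV ⊢
  rw [← ENNReal.ofReal_mul (by norm_num), ← ENNReal.ofReal_add (by positivity) (by positivity),
    ENNReal.ofReal_le_ofReal_iff (by positivity)] at hV
  exact ENNReal.ofReal_le_ofReal (by linarith)

end ELogConcave

section SecondMoment

open scoped Matrix

variable {ι : Type*} [Fintype ι] {μ : Measure (ι → ℝ)}

/-- The matrix of second moments `∫ yᵢ yⱼ dμ(y)` of a measure `μ` on `ℝ^ι`. -/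
def secondMoment (μ : Measure (ι → ℝ)) : Matrix ι ι ℝ :=
  Matrix.of fun i j => ∫ y, y i * y j ∂μ

lemma integrable_dotProduct_mul_dotProduct (hμ : ∀ i j, Integrable (fun y => y i * y j) μ)
    (u w : ι → ℝ) : Integrable (fun y => (u ⬝ᵥ y) * (w ⬝ᵥ y)) μ := by
  simp only [dotProduct, Finset.sum_mul_sum, mul_mul_mul_comm (u _)]
  exact integrable_finsetSum _ fun i _ => integrable_finsetSum _ fun j _ => (hμ i j).const_mul _

lemma integral_dotProduct_mul_dotProduct (hμ : ∀ i j, Integrable (fun y => y i * y j) μ)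
    (u w : ι → ℝ) : ∫ y, (u ⬝ᵥ y) * (w ⬝ᵥ y) ∂μ = u ⬝ᵥ secondMoment μ *ᵥ w := by
  have hterm : ∀ i j, Integrable (fun y => u i * w j * (y i * y j)) μ :=
    fun i j => (hμ i j).const_mul _
  calc ∫ y, (u ⬝ᵥ y) * (w ⬝ᵥ y) ∂μ = ∫ y, ∑ i, ∑ j, u i * w j * (y i * y j) ∂μ := by
        simp only [dotProduct, Finset.sum_mul_sum, mul_mul_mul_comm (u _)]
    _ = ∑ i, ∑ j, u i * w j * ∫ y, y i * y j ∂μ := by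
        rw [integral_finsetSum _ fun i _ => integrable_finsetSum _ fun j _ => hterm i j]
        refine Finset.sum_congr rfl fun i _ => ?_
        rw [integral_finsetSum _ fun j _ => hterm i j]
        simp only [integral_const_mul]
    _ = u ⬝ᵥ secondMoment μ *ᵥ w := by
        simp only [dotProduct, Matrix.mulVec, secondMoment, Matrix.of_apply, Finset.mul_sum]
        exact Finset.sum_congr rfl fun i _ => Finset.sum_congr rfl fun j _ => by ring

lemma integral_sum_mulVec_sq {κ : Type*} [Fintype κ]
    (hμ : ∀ i j, Integrable (fun y => y i * y j) μ) (C : Matrix κ ι ℝ) :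
    ∫ y, ∑ k, (C *ᵥ y) k ^ 2 ∂μ = (C * secondMoment μ * Cᵀ).trace := by
  simp only [sq, Matrix.mulVec]
  rw [integral_finsetSum _ fun k _ => integrable_dotProduct_mul_dotProduct hμ (C k) (C k)]
  refine Finset.sum_congr rfl fun k _ => ?_
  rw [integral_dotProduct_mul_dotProduct hμ, Matrix.mul_assoc]
  rfl

lemma posDef_secondMoment (hμ : ∀ i j, Integrable (fun y => y i * y j) μ) (hac : μ ≪ volume)
    (hμ0 : μ ≠ 0) : (secondMoment μ).PosDef := by
  refine .of_dotProduct_mulVec_pos (by ext i j; simp [secondMoment, mul_comm]) fun u hu => ?_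
  have hsq : ∀ y, 0 ≤ (u ⬝ᵥ y) * (u ⬝ᵥ y) := fun y => mul_self_nonneg _
  rw [star_trivial, ← integral_dotProduct_mul_dotProduct hμ]
  refine (integral_nonneg hsq).lt_of_ne' fun h0 => hμ0 ?_
  rw [integral_eq_zero_iff_of_nonneg hsq (integrable_dotProduct_mul_dotProduct hμ u u)] at h0
  let hyperplane := LinearMap.ker (dotProductBilin ℝ ℝ u)
  have hnull : volume (hyperplane : Set (ι → ℝ)) = 0 := by
    refine Measure.addHaar_submodule _ _ fun htop => hu (dotProduct_self_eq_zero.1 ?_)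
    exact (htop ▸ Submodule.mem_top : u ∈ hyperplane)
  have hcompl : μ (hyperplane : Set (ι → ℝ))ᶜ = 0 :=
    measure_mono_null (fun y hy h => hy (mul_self_eq_zero.1 h)) h0
  rw [← Measure.measure_univ_eq_zero, ← Set.union_compl_self (hyperplane : Set (ι → ℝ))]
  exact measure_union_null (hac hnull) hcompl

lemma integrable_exp_neg_mul_sum_sq {b : ℝ} (hb : 0 < b) :
    Integrable fun y : ι → ℝ => Real.exp (-b * ∑ i, y i ^ 2) := by
  simp only [Finset.mul_sum, Real.exp_sum]
  exact .fintype_prod_dep (f := fun _ (t : ℝ) => Real.exp (-b * t ^ 2))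
    fun _ => integrable_exp_neg_mul_sq hb

lemma integral_exp_neg_mul_sum_sq (b : ℝ) :
    ∫ y : ι → ℝ, Real.exp (-b * ∑ i, y i ^ 2) = √(Real.pi / b) ^ Fintype.card ι := by
  simp only [Finset.mul_sum, Real.exp_sum]
  rw [integral_fintype_prod_volume_eq_pow fun t : ℝ => Real.exp (-b * t ^ 2), integral_gaussian]

variable [DecidableEq ι]

lemma sum_perm_sum_perm_sign_mul_sign_mul_prod (M : Matrix ι ι ℝ) :
    ∑ σ : Equiv.Perm ι, ∑ τ : Equiv.Perm ι, ((σ.sign : ℤ) : ℝ) * ((τ.sign : ℤ) : ℝ) *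
      ∏ i, M (σ i) (τ i) = (Fintype.card ι).factorial * M.det := by
  have hrow : ∀ σ : Equiv.Perm ι, ∑ τ : Equiv.Perm ι, ((σ.sign : ℤ) : ℝ) * ((τ.sign : ℤ) : ℝ) *
      ∏ i, M (σ i) (τ i) = M.det := fun σ => by
    have hσ := Matrix.det_permute σ M
    rw [← Matrix.det_transpose, Matrix.det_apply'] at hσ
    simp only [Matrix.transpose_apply, Matrix.submatrix_apply, id] at hσ
    simp_rw [mul_assoc]
    rw [← Finset.mul_sum, hσ, ← mul_assoc]
    rcases Int.units_eq_one_or σ.sign with h | h <;> simp [h]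
  simp [hrow, Fintype.card_perm]

lemma integral_det_sq_pi [SigmaFinite μ] (hμ : ∀ i j, Integrable (fun y => y i * y j) μ) :
    ∫ x : ι → ι → ℝ, (Matrix.of x).det ^ 2 ∂(Measure.pi fun _ => μ) =
      (Fintype.card ι).factorial * (secondMoment μ).det := by
  have hexpand : ∀ x : ι → ι → ℝ, (Matrix.of x).det ^ 2 = ∑ σ : Equiv.Perm ι, ∑ τ : Equiv.Perm ι,
      ((σ.sign : ℤ) : ℝ) * ((τ.sign : ℤ) : ℝ) * ∏ i, (x i (σ i) * x i (τ i)) := fun x => by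
    rw [← Matrix.det_transpose, Matrix.det_apply', sq, Finset.sum_mul_sum]
    refine Finset.sum_congr rfl fun σ _ => Finset.sum_congr rfl fun τ _ => ?_
    simp only [Matrix.transpose_apply, Matrix.of_apply, Finset.prod_mul_distrib]
    ring
  have hterm : ∀ σ τ : Equiv.Perm ι, Integrable (fun x : ι → ι → ℝ =>
      ((σ.sign : ℤ) : ℝ) * ((τ.sign : ℤ) : ℝ) * ∏ i, (x i (σ i) * x i (τ i)))
      (Measure.pi fun _ => μ) := fun σ τ =>
    .const_mul (.fintype_prod_dep (f := fun i (y : ι → ℝ) => y (σ i) * y (τ i))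
      fun i => hμ _ _) _
  simp_rw [hexpand, ← sum_perm_sum_perm_sign_mul_sign_mul_prod]
  rw [integral_finsetSum _ fun σ _ => integrable_finsetSum _ fun τ _ => hterm σ τ]
  refine Finset.sum_congr rfl fun σ _ => ?_
  rw [integral_finsetSum _ fun τ _ => hterm σ τ]
  refine Finset.sum_congr rfl fun τ _ => ?_
  rw [integral_const_mul]
  exact congrArg _ (integral_fintype_prod_eq_prod (μ := fun _ => μ)
    fun i (y : ι → ℝ) => y (σ i) * y (τ i))

lemma exists_mul_mul_transpose_eq_one_of_posDef {M : Matrix ι ι ℝ} (hM : M.PosDef) :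
    ∃ C : Matrix ι ι ℝ, C.det ^ 2 * M.det = 1 ∧ C * M * Cᵀ = 1 := by
  obtain ⟨B, hB⟩ : ∃ B : Matrix ι ι ℝ, M = Bᵀ * B := by
    open scoped MatrixOrder in
    obtain ⟨B, hB⟩ := CStarAlgebra.nonneg_iff_eq_star_mul_self.mp hM.posSemidef.nonneg
    exact ⟨B, by
      rw [hB, Matrix.star_eq_conjTranspose, Matrix.conjTranspose_eq_transpose_of_trivial]⟩
  have hBdet : IsUnit Bᵀ.det := by
    refine isUnit_iff_ne_zero.2 fun h => hM.det_pos.ne' ?_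
    rw [hB, Matrix.det_mul, h, zero_mul]
  have hCM : Bᵀ⁻¹ * M * Bᵀ⁻¹ᵀ = 1 := by
    rw [hB, ← mul_assoc, Matrix.nonsing_inv_mul _ hBdet, one_mul, Matrix.transpose_nonsing_inv,
      Matrix.transpose_transpose, Matrix.mul_nonsing_inv _ (by rwa [Matrix.det_transpose] at hBdet)]
  refine ⟨Bᵀ⁻¹, ?_, hCM⟩
  have := congrArg Matrix.det hCM
  rw [Matrix.det_mul, Matrix.det_mul, Matrix.det_transpose, Matrix.det_one] at this
  linarith

variable {C : Matrix ι ι ℝ}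

lemma integrable_exp_neg_mul_sum_mulVec_sq (hC : C.det ≠ 0) {b : ℝ} (hb : 0 < b) :
    Integrable fun y => Real.exp (-b * ∑ i, (C *ᵥ y) i ^ 2) := by
  have hmap := (integrable_exp_neg_mul_sum_sq (ι := ι) hb).smul_measure
    (ENNReal.ofReal_ne_top (r := |C.det⁻¹|))
  rw [← Real.map_matrix_volume_pi_eq_smul_volume_pi hC] at hmap
  exact hmap.comp_measurable (LinearMap.continuous_of_finiteDimensional _).measurable

lemma integral_exp_neg_mul_sum_mulVec_sq (hC : C.det ≠ 0) (b : ℝ) :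
    ∫ y, Real.exp (-b * ∑ i, (C *ᵥ y) i ^ 2) =
      |C.det|⁻¹ * √(Real.pi / b) ^ Fintype.card ι := by
  have hcont : Continuous fun y : ι → ℝ => Real.exp (-b * ∑ i, y i ^ 2) := by fun_prop
  have hmap := integral_map (LinearMap.continuous_of_finiteDimensional
    (Matrix.toLin' C)).measurable.aemeasurable (hcont.aestronglyMeasurable (μ := .map _ volume))
  rw [Real.map_matrix_volume_pi_eq_smul_volume_pi hC, integral_smul_measure,
    integral_exp_neg_mul_sum_sq, ENNReal.toReal_ofReal (abs_nonneg _), abs_inv, smul_eq_mul] at hmap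
  exact hmap.symm

lemma measureReal_mul_exp_neg_le [IsFiniteMeasure μ] (hle : μ ≤ volume)
    (hμ : ∀ i j, Integrable (fun y => y i * y j) μ) (hμ0 : μ ≠ 0) (hC : C.det ≠ 0)
    (hCM : C * secondMoment μ * Cᵀ = 1) :
    μ.real .univ * Real.exp (-(Fintype.card ι / 2 : ℝ)) ≤
      |C.det|⁻¹ * √(2 * Real.pi / μ.real .univ) ^ Fintype.card ι := by
  set v := μ.real .univ
  have hv : 0 < v := by simpa [v, measureReal_def, ENNReal.toReal_pos_iff] using hμ0
  have : NeZero μ := ⟨hμ0⟩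
  have hq : Integrable (fun y => ∑ i, (C *ᵥ y) i ^ 2) μ := by
    simp only [sq]
    exact integrable_finsetSum _ fun i _ => integrable_dotProduct_mul_dotProduct hμ _ _
  have hgauss := integrable_exp_neg_mul_sum_mulVec_sq hC (half_pos hv)
  have haverage : ⨍ y, -(v / 2) * ∑ i, (C *ᵥ y) i ^ 2 ∂μ = -(Fintype.card ι / 2 : ℝ) := by
    rw [average_eq, integral_const_mul, integral_sum_mulVec_sq hμ, hCM, Matrix.trace_one,
      smul_eq_mul, inv_mul_eq_div, div_eq_iff hv.ne']
    ring
  have hjensen := convexOn_exp.map_average_le Real.continuous_exp.continuousOn isClosed_univ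
    (.of_forall fun _ => trivial) (hq.const_mul (-(v / 2))) (hgauss.mono_measure hle)
  rw [haverage, average_eq, smul_eq_mul, ← div_eq_inv_mul, le_div_iff₀' hv] at hjensen
  calc _ ≤ ∫ y, Real.exp (-(v / 2) * ∑ i, (C *ᵥ y) i ^ 2) ∂μ := hjensen
    _ ≤ ∫ y, Real.exp (-(v / 2) * ∑ i, (C *ᵥ y) i ^ 2) :=
        integral_mono_measure hle (.of_forall fun _ => (Real.exp_pos _).le) hgauss
    _ = _ := by
        rw [integral_exp_neg_mul_sum_mulVec_sq hC]
        congr 3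
        field_simp

lemma measureReal_univ_pow_le_det_secondMoment [IsFiniteMeasure μ] (hle : μ ≤ volume)
    (hμ : ∀ i j, Integrable (fun y => y i * y j) μ) (hμ0 : μ ≠ 0) :
    μ.real .univ ^ (Fintype.card ι + 2) ≤
      (2 * Real.pi * Real.exp 1) ^ Fintype.card ι * (secondMoment μ).det := by
  have hM := posDef_secondMoment hμ (Measure.absolutelyContinuous_of_le hle) hμ0
  obtain ⟨C, hdet, hCM⟩ := exists_mul_mul_transpose_eq_one_of_posDef hM
  have hC : C.det ≠ 0 := fun h => by simp [h] at hdet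
  have hle' := measureReal_mul_exp_neg_le hle hμ hμ0 hC hCM
  set v := μ.real .univ
  set n := Fintype.card ι
  have hv : 0 < v := by simpa [v, measureReal_def, ENNReal.toReal_pos_iff] using hμ0
  have hexp : Real.exp (-(n / 2 : ℝ)) ^ 2 = (Real.exp 1 ^ n)⁻¹ := by
    rw [← Real.exp_nat_mul, ← Real.exp_nat_mul, ← Real.exp_neg]
    congr 1
    push_cast
    ring
  have hsqrt : (√(2 * Real.pi / v) ^ n) ^ 2 = (2 * Real.pi) ^ n / v ^ n := by
    rw [pow_right_comm, Real.sq_sqrt (by positivity), div_pow]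
  have hsq := pow_le_pow_left₀ (by positivity) hle' 2
  rw [mul_pow, mul_pow, hexp, hsqrt, inv_pow, sq_abs, inv_eq_of_mul_eq_one_right hdet,
    ← div_eq_mul_inv, div_le_iff₀ (by positivity), mul_div_assoc', div_mul_eq_mul_div,
    le_div_iff₀ (by positivity)] at hsq
  calc v ^ (n + 2) = v ^ 2 * v ^ n := by ring
    _ ≤ _ := hsq
    _ = _ := by rw [mul_pow (2 * Real.pi)]; ring

variable {S : Set (ι → ℝ)} {D : ℝ}

lemma measureReal_le_of_isBounded_of_abs_det_le (hbdd : Bornology.IsBounded S) (hD0 : 0 ≤ D)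
    (hD : ∀ x : ι → ι → ℝ, (∀ i, x i ∈ S) → |(Matrix.of x).det| ≤ D) :
    volume.real S ≤
      √((2 * Real.pi * Real.exp 1) ^ Fintype.card ι / (Fintype.card ι).factorial) * D := by
  by_cases hS0 : volume S = 0
  · rw [measureReal_def, hS0, ENNReal.toReal_zero]
    positivity
  set n := Fintype.card ι
  set v := volume.real S with hv_def
  have : IsFiniteMeasure (volume.restrict S) := isFiniteMeasure_restrict.2 hbdd.measure_lt_top.ne
  have hmoments : ∀ i j, Integrable (fun y : ι → ℝ => y i * y j) (volume.restrict S) := fun i j =>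
    IntegrableOn.mono_set (t := closure S) ((by fun_prop : Continuous fun y : ι → ℝ => y i * y j)
      |>.continuousOn.integrableOn_compact hbdd.isCompact_closure) subset_closure
  have hv : 0 < v := ENNReal.toReal_pos hS0 hbdd.measure_lt_top.ne
  have hlower := measureReal_univ_pow_le_det_secondMoment Measure.restrict_le_self hmoments
    (Measure.restrict_eq_zero.not.2 hS0)
  rw [measureReal_restrict_apply_univ, ← hv_def] at hlower
  have hprod : (Measure.pi fun _ : ι => volume) (Set.univ.pi fun _ => S) = volume S ^ n := by
    rw [Measure.pi_pi, Finset.prod_const, Finset.card_univ]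
  have hupper : n.factorial * (secondMoment (volume.restrict S)).det ≤ D ^ 2 * v ^ n := by
    rw [← integral_det_sq_pi hmoments, ← Measure.restrict_pi_pi]
    refine (Real.le_norm_self _).trans ((norm_setIntegral_le_of_norm_le_const (C := D ^ 2)
      (hprod ▸ ENNReal.pow_lt_top hbdd.measure_lt_top) fun x hx => ?_).trans_eq ?_)
    · rw [Real.norm_eq_abs, abs_pow]
      exact pow_le_pow_left₀ (abs_nonneg _) (hD x fun i => hx i trivial) 2
    · rw [measureReal_def, hprod, ENNReal.toReal_pow, hv_def, measureReal_def]
  refine abs_le_of_sq_le_sq' ?_ (by positivity) |>.2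
  rw [mul_pow, Real.sq_sqrt (by positivity), div_mul_eq_mul_div, le_div_iff₀ (by positivity)]
  refine le_of_mul_le_mul_right ?_ (pow_pos hv n)
  calc v ^ 2 * n.factorial * v ^ n = n.factorial * v ^ (n + 2) := by ring
    _ ≤ n.factorial * ((2 * Real.pi * Real.exp 1) ^ n *
          (secondMoment (volume.restrict S)).det) := by gcongr
    _ = (2 * Real.pi * Real.exp 1) ^ n *
          (n.factorial * (secondMoment (volume.restrict S)).det) := by ring
    _ ≤ (2 * Real.pi * Real.exp 1) ^ n * (D ^ 2 * v ^ n) := by gcongr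
    _ = _ := by ring

lemma measure_le_of_abs_det_le (hD0 : 0 ≤ D)
    (hD : ∀ x : ι → ι → ℝ, (∀ i, x i ∈ S) → |(Matrix.of x).det| ≤ D) :
    volume S ≤ ENNReal.ofReal
      (√((2 * Real.pi * Real.exp 1) ^ Fintype.card ι / (Fintype.card ι).factorial) * D) := by
  have hexhaust : S = ⋃ m : ℕ, S ∩ Metric.closedBall 0 m := by
    rw [← Set.inter_iUnion, Metric.iUnion_closedBall_nat, Set.inter_univ]
  have hmono : Monotone fun m : ℕ => S ∩ Metric.closedBall 0 m := fun a b hab =>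
    Set.inter_subset_inter_right _ (Metric.closedBall_subset_closedBall (by exact_mod_cast hab))
  rw [hexhaust, hmono.measure_iUnion]
  refine iSup_le fun m => ?_
  have hbdd : Bornology.IsBounded (S ∩ Metric.closedBall 0 m) :=
    Metric.isBounded_closedBall.subset Set.inter_subset_right
  rw [← ENNReal.ofReal_toReal hbdd.measure_lt_top.ne]
  exact ENNReal.ofReal_le_ofReal
    (measureReal_le_of_isBounded_of_abs_det_le hbdd hD0 fun x hx => hD x fun i => (hx i).1)

end SecondMoment

section InscribedSimplex

variable {n : ℕ}

lemma sq_mul_pow_le_of_two_le (hn : 2 ≤ n) : (n : ℝ) ^ 2 * 0.182 ^ n ≤ 0.133 := by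
  induction n, hn using Nat.le_induction with
  | base => norm_num
  | succ n hn ih =>
    have hn' : (2 : ℝ) ≤ n := by exact_mod_cast hn
    have hratio : ((n : ℝ) + 1) ^ 2 * 0.182 ≤ (n : ℝ) ^ 2 := by nlinarith
    push_cast
    calc ((n : ℝ) + 1) ^ 2 * 0.182 ^ (n + 1) = (((n : ℝ) + 1) ^ 2 * 0.182) * 0.182 ^ n := by ring
      _ ≤ (n : ℝ) ^ 2 * 0.182 ^ n := by gcongr
      _ ≤ 0.133 := ih

lemma sq_mul_pow_lt_factorial (hn : 2 ≤ n) :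
    25 * (n : ℝ) ^ 2 * (2 * Real.pi * Real.exp 1 * n / 256) ^ n < n.factorial := by
  have hn' : (2 : ℝ) ≤ n := by exact_mod_cast hn
  have hsqrt : (3.5 : ℝ) ≤ √(2 * Real.pi * n) :=
    Real.le_sqrt_of_sq_le (by nlinarith [Real.pi_gt_d2])
  have hbase : 2 * Real.pi * Real.exp 1 * n / 256 ≤ 0.182 * (n / Real.exp 1) := by
    have hexp : Real.exp 1 ^ 2 ≤ 7.3891 := by
      nlinarith [Real.exp_one_lt_d9, Real.exp_pos 1]
    have hpi : Real.pi * Real.exp 1 ^ 2 ≤ 3.15 * 7.3891 := by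
      gcongr
      exact Real.pi_lt_d2.le
    rw [mul_div_assoc', div_le_div_iff₀ (by norm_num) (by positivity)]
    nlinarith
  calc 25 * (n : ℝ) ^ 2 * (2 * Real.pi * Real.exp 1 * n / 256) ^ n
      ≤ 25 * (n : ℝ) ^ 2 * (0.182 * (n / Real.exp 1)) ^ n := by gcongr
    _ = 25 * ((n : ℝ) ^ 2 * 0.182 ^ n) * (n / Real.exp 1) ^ n := by rw [mul_pow]; ring
    _ ≤ 25 * 0.133 * (n / Real.exp 1) ^ n := by gcongr; exact sq_mul_pow_le_of_two_le hn
    _ < 3.5 * (n / Real.exp 1) ^ n := by gcongr; norm_num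
    _ ≤ √(2 * Real.pi * n) * (n / Real.exp 1) ^ n := by gcongr
    _ ≤ n.factorial := Stirling.le_factorial_stirling n

lemma five_mul_sqrt_mul_pow_lt_one (hn : 2 ≤ n) :
    5 * n * (√((2 * Real.pi * Real.exp 1) ^ n / n.factorial) * (√n / 16) ^ n) < 1 := by
  rw [← sq_lt_one_iff₀ (by positivity)]
  calc (5 * n * (√((2 * Real.pi * Real.exp 1) ^ n / n.factorial) * (√n / 16) ^ n)) ^ 2
      = 25 * (n : ℝ) ^ 2 * (2 * Real.pi * Real.exp 1 * n / 256) ^ n / n.factorial := by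
        rw [mul_pow, mul_pow, mul_pow, Real.sq_sqrt (by positivity), pow_right_comm, div_pow √n,
          Real.sq_sqrt (by positivity),
          show 2 * Real.pi * Real.exp 1 * n / 256 = 2 * Real.pi * Real.exp 1 * (n / 16 ^ 2) by ring,
          mul_pow _ ((n : ℝ) / 16 ^ 2)]
        ring
    _ < 1 := (div_lt_one (by positivity)).2 (sq_mul_pow_lt_factorial hn)

/-- If every simplex with vertices in a superlevel set had small volume, all superlevel sets would
be small, contradicting the layer-cake bound. -/
lemma ELogConcave.exists_simplex (hn : 2 ≤ n) {h : (Fin n → ℝ) → ℝ≥0∞} (hh : ELogConcave h)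
    (hm : Measurable h) (h0 : ∫⁻ x, h x ≠ 0) (hfin : ∫⁻ x, h x ≠ ∞) :
    ∃ (τ : ℝ) (x₀ : Fin n → ℝ) (x : Fin n → Fin n → ℝ), 0 < τ ∧ ENNReal.ofReal τ ≤ h x₀ ∧
      (∀ i, ENNReal.ofReal τ ≤ h (x i)) ∧
      ∫⁻ y, h y ≤ ENNReal.ofReal ((16 / √n) ^ n * τ * |(Matrix.of fun i => x i - x₀).det|) := by
  by_contra! hcon
  obtain ⟨v, hv, hvh⟩ : ∃ v, 0 < v ∧ ∫⁻ x, h x = ENNReal.ofReal v :=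
    ⟨_, ENNReal.toReal_pos h0 hfin, (ENNReal.ofReal_toReal hfin).symm⟩
  have : (0 : ℝ) < n := by exact_mod_cast (by omega : 0 < n)
  set K := √((2 * Real.pi * Real.exp 1) ^ n / n.factorial)
  set Q := v * (√n / 16) ^ n with hQ
  have hdet : ∀ τ x₀, 0 < τ → ENNReal.ofReal τ ≤ h x₀ → ∀ x : Fin n → Fin n → ℝ,
      (∀ i, ENNReal.ofReal τ ≤ h (x i + x₀)) → |(Matrix.of x).det| ≤ Q / τ := by
    intro τ x₀ hτ hx₀ x hx
    have hlt := hcon τ x₀ (fun i => x i + x₀) hτ hx₀ hx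
    simp only [add_sub_cancel_right] at hlt
    rw [hvh, ENNReal.ofReal_lt_ofReal_iff hv] at hlt
    rw [le_div_iff₀ hτ]
    calc |(Matrix.of x).det| * τ
        = (16 / √n) ^ n * τ * |(Matrix.of x).det| * (√n / 16) ^ n := by
          rw [div_pow, div_pow]
          field_simp
      _ ≤ Q := by rw [hQ]; gcongr
  have hlevel : ∀ τ, 0 < τ → volume {x | ENNReal.ofReal τ ≤ h x} ≤ ENNReal.ofReal (K * Q / τ) := by
    intro τ hτ
    obtain hempty | ⟨x₀, hx₀⟩ := Set.eq_empty_or_nonempty {x | ENNReal.ofReal τ ≤ h x}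
    · simp [hempty]
    have hvol := measure_le_of_abs_det_le (S := (· + x₀) ⁻¹' {x | ENNReal.ofReal τ ≤ h x})
      (by positivity) (hdet τ x₀ hτ hx₀)
    rwa [measure_preimage_add_right, Fintype.card_fin, ← mul_div_assoc] at hvol
  have hle := hh.lintegral_le_of_measure_le hm h0 hfin (by simpa using hn)
    (show 0 ≤ K * Q by positivity) hlevel
  rw [hvh, ENNReal.ofReal_le_ofReal_iff (by positivity), Module.finrank_fin_fun] at hle
  refine hle.not_gt ?_
  calc 5 * n * (K * Q) = v * (5 * n * (K * (√n / 16) ^ n)) := by rw [hQ]; ring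
    _ < v := mul_lt_of_lt_one_right hv (five_mul_sqrt_mul_pow_lt_one hn)

lemma add_sum_smul_sub_mem_of_convex {ι E : Type*} [Fintype ι] [Nonempty ι] [AddCommGroup E]
    [Module ℝ E] {S : Set E} (hS : Convex ℝ S) {x₀ : E} {x : ι → E} (hx₀ : x₀ ∈ S)
    (hx : ∀ i, x i ∈ S) {t : ι → ℝ} (ht : t ∈ Icc 0 1) :
    x₀ + ∑ i, (t i / Fintype.card ι) • (x i - x₀) ∈ S := by
  have hsum : ∑ _i : ι, (Fintype.card ι : ℝ)⁻¹ = 1 := by simp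
  have hmem : ∑ i, (Fintype.card ι : ℝ)⁻¹ • (x₀ + t i • (x i - x₀)) ∈ S :=
    hS.sum_mem (fun _ _ => by positivity) hsum
      fun i _ => hS.add_smul_sub_mem hx₀ (hx i) ⟨ht.1 i, ht.2 i⟩
  simpa only [smul_add, Finset.sum_add_distrib, ← Finset.sum_smul, hsum, one_smul, smul_smul,
    inv_mul_eq_div] using hmem

lemma sixteen_mul_sqrt_pow (hn : 0 < n) : (16 * √n) ^ n = (n : ℝ) ^ n * (16 / √n) ^ n := by
  rw [← mul_pow]
  congr 1
  field_simp
  rw [Real.sq_sqrt n.cast_nonneg]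

lemma ELogConcave.exists_cube (hn : 2 ≤ n) {h : (Fin n → ℝ) → ℝ≥0∞} (hh : ELogConcave h)
    (hm : Measurable h) (h0 : ∫⁻ x, h x ≠ 0) (hfin : ∫⁻ x, h x ≠ ∞) :
    ∃ (τ : ℝ) (A : (Fin n → ℝ) ≃L[ℝ] (Fin n → ℝ)) (p : Fin n → ℝ), 0 < τ ∧
      (∀ y ∈ Icc p (p + 1), ENNReal.ofReal τ ≤ h (A y)) ∧
      ∫⁻ y, h (A y) ≤ ENNReal.ofReal ((16 * √n) ^ n * τ) := by
  obtain ⟨τ, x₀, x, hτ, hx₀, hx, hle⟩ := hh.exists_simplex hn hm h0 hfin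
  have : Nonempty (Fin n) := ⟨⟨0, by omega⟩⟩
  have hn0 : (0 : ℝ) < n := by exact_mod_cast (by omega : 0 < n)
  set D : Matrix (Fin n) (Fin n) ℝ := .of fun i => x i - x₀
  have hD0 : D.det ≠ 0 := fun hdet => h0 (by simpa [hdet] using hle)
  set L := Matrix.toLin' ((n : ℝ)⁻¹ • D.transpose)
  have hL : LinearMap.det L = (n : ℝ)⁻¹ ^ n * D.det := by
    rw [LinearMap.det_toLin', Matrix.det_smul, Matrix.det_transpose, Fintype.card_fin]
  have hL0 : LinearMap.det L ≠ 0 := hL ▸ by positivity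
  let A := (LinearMap.equivOfDetNeZero L hL0).toContinuousLinearEquiv
  have hA : ∀ y, A y = ∑ i, (y i / n) • (x i - x₀) := fun y => by
    change ((n : ℝ)⁻¹ • D.transpose).mulVec y = _
    rw [Matrix.smul_mulVec, Matrix.mulVec_transpose, Matrix.vecMul_eq_sum, Finset.smul_sum]
    simp only [smul_smul, inv_mul_eq_div]
    rfl
  refine ⟨τ, A, A.symm x₀, hτ, fun y hy => ?_, ?_⟩
  · have ht : y - A.symm x₀ ∈ Icc 0 1 :=
      ⟨sub_nonneg.2 hy.1, sub_le_iff_le_add'.2 hy.2⟩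
    have hmem := add_sum_smul_sub_mem_of_convex (hh.convex_setOf_le (ENNReal.ofReal τ)) hx₀ hx ht
    rwa [Fintype.card_fin, ← hA, map_sub, A.apply_symm_apply, add_sub_cancel] at hmem
  · have hmap : ∫⁻ z, h z ∂(Measure.map L volume) = ∫⁻ y, h (A y) :=
      A.toHomeomorph.measurableEmbedding.lintegral_map h
    rw [← hmap, Measure.map_linearMap_addHaar_eq_smul_addHaar _ hL0, lintegral_smul_measure]
    refine (mul_le_mul_right hle _).trans_eq ?_
    rw [← ENNReal.ofReal_mul (abs_nonneg _), hL]
    congr 1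
    rw [sixteen_mul_sqrt_pow (by omega), abs_inv, abs_mul,
      abs_of_pos (by positivity : 0 < (n : ℝ)⁻¹ ^ n)]
    field_simp
    rw [← mul_pow, one_div_mul_cancel hn0.ne', one_pow]

end InscribedSimplex

/-- Functions into `[0, ∞]` all of whose strict superlevel sets are σ-compact. Unlike upper
semicontinuity or Borel measurability, this property survives suprema over uncountable families
of substitutions, because projections preserve σ-compactness. -/
def HasSigmaCompactSuperlevels {X : Type*} [TopologicalSpace X] (F : X → ℝ≥0∞) : Prop :=
  ∀ c, IsSigmaCompact {x | c < F x}

namespace HasSigmaCompactSuperlevels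

variable {X Y P : Type*} [TopologicalSpace X] [TopologicalSpace Y] [TopologicalSpace P]
  {F : X → ℝ≥0∞}

lemma of_upperSemicontinuous [SigmaCompactSpace X] (hF : UpperSemicontinuous F) :
    HasSigmaCompactSuperlevels F := by
  intro c
  obtain ⟨D, hD, hdense⟩ := TopologicalSpace.exists_countable_dense ℝ≥0∞
  have := (hD.mono (Set.inter_subset_left (t := Set.Ioi c))).to_subtype
  have hunion : {x | c < F x} = ⋃ q : ↥(D ∩ Set.Ioi c), F ⁻¹' Ici q := by
    ext x
    simp only [Set.mem_ofPred_eq, Set.mem_iUnion, Set.mem_preimage, Set.mem_Ici, Subtype.exists,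
      Set.mem_inter_iff, Set.mem_Ioi, exists_prop]
    constructor
    · intro hx
      obtain ⟨q, hq, hcq, hqF⟩ := hdense.exists_between hx
      exact ⟨q, ⟨hq, hcq⟩, hqF.le⟩
    · rintro ⟨q, ⟨-, hcq⟩, hqF⟩
      exact hcq.trans_le hqF
  rw [hunion]
  exact isSigmaCompact_iUnion _ fun q =>
    isSigmaCompact_univ.of_isClosed_subset (hF.isClosed_preimage q) (Set.subset_univ _)

lemma iSup_comp [T2Space X] [SigmaCompactSpace Y] [SigmaCompactSpace P]
    (hF : HasSigmaCompactSuperlevels F) {h : Y → P → X} (hh : Continuous (Function.uncurry h)) :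
    HasSigmaCompactSuperlevels fun y => ⨆ p, F (h y p) := by
  intro c
  have himage : {y | c < ⨆ p, F (h y p)} =
      Prod.fst '' (Function.uncurry h ⁻¹' {x | c < F x}) := by
    ext y
    simp [lt_iSup_iff]
  obtain ⟨K, hK, hKF⟩ := hF c
  rw [himage, ← hKF, Set.preimage_iUnion]
  refine (isSigmaCompact_iUnion _ fun m => ?_).image continuous_fst
  exact isSigmaCompact_univ.of_isClosed_subset ((hK m).isClosed.preimage hh) (Set.subset_univ _)

lemma measurable [T2Space X] [MeasurableSpace X] [BorelSpace X]
    (hF : HasSigmaCompactSuperlevels F) : Measurable F := by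
  refine measurable_of_Ioi fun c => ?_
  obtain ⟨K, hK, hKF⟩ := hF c
  rw [show F ⁻¹' Set.Ioi c = ⋃ m, K m from hKF.symm]
  exact .iUnion fun m => (hK m).measurableSet

end HasSigmaCompactSuperlevels

section BoxExpansion

variable {ι : Type*} [DecidableEq ι]

/-- The supremum of `F` over the coordinates in `J`, as a function on the whole space that does not
depend on these coordinates. -/
def supMarginal (J : Finset ι) (F : (ι → ℝ) → ℝ≥0∞) (x : ι → ℝ) : ℝ≥0∞ :=
  ⨆ z : ι → ℝ, F (J.piecewise z x)

/-- The sup-convolution of `F` with the indicator of the box `[0, t]^s`. The translations `u` are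
indexed by the full cube, and only their coordinates in `s` are used. -/
def boxSup (t : ℝ) (s : Finset ι) (F : (ι → ℝ) → ℝ≥0∞) (x : ι → ℝ) : ℝ≥0∞ :=
  ⨆ u : Icc (0 : ι → ℝ) (fun _ => t), F (x - s.piecewise u.1 0)

variable {F : (ι → ℝ) → ℝ≥0∞} {t : ℝ} {s J : Finset ι} {i : ι}

lemma continuous_uncurry_piecewise (J : Finset ι) :
    Continuous fun x : (ι → ℝ) × (ι → ℝ) => J.piecewise x.2 x.1 := by
  refine continuous_pi fun i => ?_
  by_cases hi : i ∈ J
  · simp only [Finset.piecewise_eq_of_mem _ _ _ hi]; fun_prop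
  · simp only [Finset.piecewise_eq_of_notMem _ _ _ hi]; fun_prop

lemma HasSigmaCompactSuperlevels.supMarginal [Finite ι] (hF : HasSigmaCompactSuperlevels F)
    (J : Finset ι) : HasSigmaCompactSuperlevels (supMarginal J F) :=
  hF.iSup_comp (continuous_uncurry_piecewise J)

lemma HasSigmaCompactSuperlevels.boxSup [Finite ι] (hF : HasSigmaCompactSuperlevels F)
    (t : ℝ) (s : Finset ι) : HasSigmaCompactSuperlevels (boxSup t s F) := by
  refine hF.iSup_comp (h := fun x (u : Icc (0 : ι → ℝ) _) => x - s.piecewise u.1 0) ?_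
  exact continuous_fst.sub ((continuous_uncurry_piecewise s).comp
    (continuous_const.prodMk (continuous_subtype_val.comp continuous_snd)))

lemma boxSup_update_sub_le (hi : i ∉ s) (x : ι → ℝ) (b : ℝ) {u : ℝ} (hu : u ∈ Icc 0 t) :
    boxSup t s F (Function.update x i (b - u)) ≤
      boxSup t (insert i s) F (Function.update x i b) := by
  refine iSup_le fun v => ?_
  have hmem : Function.update v.1 i u ∈ Icc (0 : ι → ℝ) (fun _ => t) :=
    ⟨le_update_iff.2 ⟨hu.1, fun j _ => v.2.1 j⟩, update_le_iff.2 ⟨hu.2, fun j _ => v.2.2 j⟩⟩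
  refine le_iSup_of_le ⟨_, hmem⟩ (le_of_eq (congrArg F (funext fun j => ?_)))
  obtain rfl | hj := eq_or_ne j i
  · simp [hi]
  · by_cases hjs : j ∈ s <;> simp [hj, hjs]

lemma boxSup_supMarginal_singleton (hi : i ∉ s) (x : ι → ℝ) :
    boxSup t s (supMarginal {i} F) x = ⨆ a, boxSup t s F (Function.update x i a) := by
  have hpoint : ∀ (u z : ι → ℝ), ({i} : Finset ι).piecewise z (x - s.piecewise u 0) =
      Function.update x i (z i) - s.piecewise u 0 := by
    intro u z
    ext j
    obtain rfl | hj := eq_or_ne j i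
    · simp [hi]
    · simp [hj]
  simp only [boxSup, supMarginal, hpoint]
  rw [iSup_comm]
  exact (Function.surjective_eval (β := fun _ : ι => ℝ) i).iSup_comp
    (g := fun a => ⨆ u : Icc (0 : ι → ℝ) _, F (Function.update x i a - s.piecewise u.1 0))

lemma supMarginal_supMarginal_singleton (hi : i ∉ J) :
    supMarginal J (supMarginal {i} F) = supMarginal (insert i J) F := by
  ext x
  have hpoint : ∀ z w : ι → ℝ, ({i} : Finset ι).piecewise w (J.piecewise z x) =
      (insert i J).piecewise (Function.update z i (w i)) x := by
    intro z w
    ext j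
    obtain rfl | hj := eq_or_ne j i
    · simp
    · by_cases hjs : j ∈ J <;> simp [hj, hjs]
  simp only [supMarginal, hpoint]
  exact le_antisymm (iSup₂_le fun z w => le_iSup_of_le (Function.update z i (w i)) le_rfl)
    (iSup_le fun z => le_iSup₂_of_le z z (by simp))

/-- Cut the line at `a` and slide the right half by `t`: this frees an interval of length `t` on
which `ψ ≥ φ a`. -/
lemma lintegral_add_mul_le_of_forall_sub_le {φ ψ : ℝ → ℝ≥0∞} (ht : 0 ≤ t)
    (h : ∀ b, ∀ u ∈ Icc 0 t, φ (b - u) ≤ ψ b) (a : ℝ) :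
    (∫⁻ b, φ b) + ENNReal.ofReal t * φ a ≤ ∫⁻ b, ψ b := by
  have hleft : ∫⁻ b in Iio a, φ b ≤ ∫⁻ b in Iio a, ψ b :=
    lintegral_mono fun b => by simpa using h b 0 ⟨le_rfl, ht⟩
  have hmid : ENNReal.ofReal t * φ a ≤ ∫⁻ b in Ico a (a + t), ψ b := calc
    _ = ∫⁻ _ in Ico a (a + t), φ a := by simp [mul_comm]
    _ ≤ _ := setLIntegral_mono' measurableSet_Ico fun b hb => by
      simpa using h b (b - a) ⟨by linarith [hb.1], by linarith [hb.2]⟩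
  have hright : ∫⁻ b in Ici a, φ b ≤ ∫⁻ b in Ici (a + t), ψ b := calc
    _ = ∫⁻ b in Ici (a + t), φ (b - t) := by
      rw [← (measurePreserving_sub_right (volume : Measure ℝ) t).setLIntegral_comp_preimage_emb
        (MeasurableEquiv.subRight t).measurableEmbedding φ (Ici a), Set.preimage_sub_const_Ici]
    _ ≤ _ := lintegral_mono fun b => h b t ⟨ht, le_rfl⟩
  have hIio : ∀ χ : ℝ → ℝ≥0∞, ∫⁻ b, χ b = (∫⁻ b in Iio a, χ b) + ∫⁻ b in Ici a, χ b := fun χ => by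
    rw [← lintegral_add_compl χ measurableSet_Iio, Set.compl_Iio]
  calc (∫⁻ b, φ b) + ENNReal.ofReal t * φ a
      = (∫⁻ b in Iio a, φ b) + (ENNReal.ofReal t * φ a + ∫⁻ b in Ici a, φ b) := by
        rw [hIio φ]; ring
    _ ≤ (∫⁻ b in Iio a, ψ b) +
          ((∫⁻ b in Ico a (a + t), ψ b) + ∫⁻ b in Ici (a + t), ψ b) := by gcongr
    _ = ∫⁻ b, ψ b := by
        rw [hIio ψ, ← Set.Ico_union_Ici_eq_Ici (show a ≤ a + t by linarith), lintegral_union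
          measurableSet_Ici (Set.disjoint_left.2 fun b hb hb' => (hb.2.trans_le hb').false)]

lemma lmarginal_add_mul_le_lmarginal_insert_boxSup [Finite ι] (ht : 0 ≤ t) (hi : i ∉ s)
    (hF : HasSigmaCompactSuperlevels F) (x : ι → ℝ) :
    (∫⋯∫⁻_insert i s, boxSup t s F) x +
        ENNReal.ofReal t * (∫⋯∫⁻_s, boxSup t s (supMarginal {i} F)) x ≤
      (∫⋯∫⁻_insert i s, boxSup t (insert i s) F) x := by
  have hmeas : Measurable fun y => boxSup t s (supMarginal {i} F) (Function.updateFinset x s y) :=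
    ((hF.supMarginal {i}).boxSup t s).measurable.comp measurable_updateFinset
  have hline : ∀ y, (∫⁻ b, boxSup t s F (Function.update y i b)) +
      ENNReal.ofReal t * boxSup t s (supMarginal {i} F) y ≤
        ∫⁻ b, boxSup t (insert i s) F (Function.update y i b) := by
    intro y
    rw [boxSup_supMarginal_singleton hi, ENNReal.mul_iSup, ENNReal.add_iSup]
    exact iSup_le (lintegral_add_mul_le_of_forall_sub_le ht
      fun b u hu => boxSup_update_sub_le hi y b hu)
  rw [lmarginal_insert' _ (hF.boxSup t s).measurable hi,
    lmarginal_insert' _ (hF.boxSup t (insert i s)).measurable hi]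
  simp only [lmarginal]
  rw [← lintegral_const_mul _ hmeas, ← lintegral_add_right _ (hmeas.const_mul _)]
  exact lintegral_mono fun y => hline _

lemma sum_powerset_lmarginal_supMarginal_le [Finite ι] (ht : 0 ≤ t)
    (hF : HasSigmaCompactSuperlevels F) (s : Finset ι) (x : ι → ℝ) :
    ∑ I ∈ s.powerset, ENNReal.ofReal t ^ (s \ I).card * (∫⋯∫⁻_I, supMarginal (s \ I) F) x ≤
      (∫⋯∫⁻_s, boxSup t s F) x := by
  induction s using Finset.induction_on generalizing F x with
  | empty =>
    have hbox : Nonempty (Icc (0 : ι → ℝ) (fun _ => t)) := ⟨0, le_rfl, fun _ => ht⟩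
    simp [supMarginal, boxSup, ciSup_const]
  | insert i s hi ih =>
    refine le_trans ?_ (lmarginal_add_mul_le_lmarginal_insert_boxSup ht hi hF x)
    rw [Finset.sum_powerset_insert hi, add_comm]
    gcongr ?_ + ?_
    · have hmeas : ∀ I, Measurable fun b =>
          (∫⋯∫⁻_I, supMarginal (s \ I) F) (Function.update x i b) := fun I =>
        ((hF.supMarginal _).measurable.lmarginal _).comp (measurable_update x)
      rw [lmarginal_insert _ (hF.boxSup t s).measurable hi]
      refine le_trans (le_of_eq ?_) (lintegral_mono fun b => ih hF (Function.update x i b))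
      rw [lintegral_finsetSum _ fun I _ => (hmeas I).const_mul _]
      refine Finset.sum_congr rfl fun I hI => ?_
      have hiI : i ∉ I := fun h => hi (Finset.mem_powerset.1 hI h)
      rw [lintegral_const_mul _ (hmeas I), lmarginal_insert _ (hF.supMarginal _).measurable hiI,
        Finset.insert_sdiff_insert, Finset.sdiff_insert_of_notMem hi]
    · refine le_trans (le_of_eq ?_) (mul_le_mul_right (ih (hF.supMarginal {i}) x) _)
      rw [Finset.mul_sum]
      refine Finset.sum_congr rfl fun I hI => ?_
      have hiI : i ∉ I := fun h => hi (Finset.mem_powerset.1 hI h)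
      have hisI : i ∉ s \ I := fun h => hi (Finset.mem_sdiff.1 h).1
      rw [supMarginal_supMarginal_singleton hisI, Finset.insert_sdiff_of_notMem _ hiI,
        Finset.card_insert_of_notMem hisI, pow_succ]
      ring

end BoxExpansion

section Finner

variable {ι α : Type*} [DecidableEq ι] {X : ι → Type*} [∀ i, MeasurableSpace (X i)]
  {μ : ∀ i, Measure (X i)} [∀ i, SigmaFinite (μ i)] {T : Finset α} {S : α → Finset ι}
  {w : α → ℝ} {φ : α → (∀ i, X i) → ℝ≥0∞}

lemma lmarginal_inter_insert_update {f : (∀ i, X i) → ℝ≥0∞} (hf : Measurable f) {S s : Finset ι}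
    (hS : DependsOn f S) {i : ι} (hi : i ∉ S) (x : ∀ i, X i) (b : X i) :
    (∫⋯∫⁻_S ∩ s, f ∂μ) (Function.update x i b) = (∫⋯∫⁻_S ∩ insert i s, f ∂μ) x := by
  rw [Finset.inter_insert_of_notMem hi, lmarginal_update_of_notMem hf (by simp [hi])]
  congr 1 with y
  exact hS fun j hj => Function.update_of_ne (fun h => hi (by simpa [h] using hj)) _ _

/-- Finner's inequality, by induction on `s` with Hölder's inequality in the new variable. -/
lemma lmarginal_prod_rpow_le (hw : ∀ a ∈ T, 0 ≤ w a) (hcover : ∀ i, ∑ a ∈ T with i ∈ S a, w a = 1)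
    (hφ : ∀ a ∈ T, Measurable (φ a)) (hS : ∀ a ∈ T, DependsOn (φ a) (S a)) (s : Finset ι)
    (x : ∀ i, X i) :
    (∫⋯∫⁻_s, fun y => ∏ a ∈ T, φ a y ^ w a ∂μ) x ≤ ∏ a ∈ T, (∫⋯∫⁻_S a ∩ s, φ a ∂μ) x ^ w a := by
  induction s using Finset.induction_on generalizing x with
  | empty => simp
  | insert i s hi ih =>
    have hmeas : ∀ a ∈ T, Measurable fun b => (∫⋯∫⁻_S a ∩ s, φ a ∂μ) (Function.update x i b) :=
      fun a ha => ((hφ a ha).lmarginal _).comp (measurable_update x)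
    set in_i := {a ∈ T | i ∈ S a}
    set out := {a ∈ T | i ∉ S a}
    have hsplit : ∀ b, ∏ a ∈ T, (∫⋯∫⁻_S a ∩ s, φ a ∂μ) (Function.update x i b) ^ w a =
        (∏ a ∈ in_i, (∫⋯∫⁻_S a ∩ s, φ a ∂μ) (Function.update x i b) ^ w a) *
          ∏ a ∈ out, (∫⋯∫⁻_S a ∩ insert i s, φ a ∂μ) x ^ w a := by
      intro b
      rw [← Finset.prod_filter_mul_prod_filter_not T (fun a => i ∈ S a)]
      refine congrArg _ (Finset.prod_congr rfl fun a ha => ?_)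
      obtain ⟨haT, hia⟩ := Finset.mem_filter.1 ha
      rw [lmarginal_inter_insert_update (hφ a haT) (hS a haT) hia]
    have hholder : ∫⁻ b, ∏ a ∈ in_i, (∫⋯∫⁻_S a ∩ s, φ a ∂μ) (Function.update x i b) ^ w a ∂μ i ≤
        ∏ a ∈ in_i, (∫⋯∫⁻_S a ∩ insert i s, φ a ∂μ) x ^ w a := by
      refine (ENNReal.lintegral_prod_norm_pow_le _
        (fun a ha => (hmeas a (Finset.mem_filter.1 ha).1).aemeasurable) (hcover i)
        fun a ha => hw a (Finset.mem_filter.1 ha).1).trans_eq (Finset.prod_congr rfl fun a ha => ?_)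
      obtain ⟨haT, hia⟩ := Finset.mem_filter.1 ha
      rw [Finset.inter_insert_of_mem hia, lmarginal_insert _ (hφ a haT) (by simp [hi])]
    calc (∫⋯∫⁻_insert i s, fun y => ∏ a ∈ T, φ a y ^ w a ∂μ) x
        = ∫⁻ b, (∫⋯∫⁻_s, fun y => ∏ a ∈ T, φ a y ^ w a ∂μ) (Function.update x i b) ∂μ i :=
          lmarginal_insert _ (Finset.measurable_prod _ fun a ha => (hφ a ha).pow_const _) hi x
      _ ≤ ∫⁻ b, ∏ a ∈ T, (∫⋯∫⁻_S a ∩ s, φ a ∂μ) (Function.update x i b) ^ w a ∂μ i :=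
          lintegral_mono fun b => ih _
      _ = (∫⁻ b, ∏ a ∈ in_i, (∫⋯∫⁻_S a ∩ s, φ a ∂μ) (Function.update x i b) ^ w a ∂μ i) *
            ∏ a ∈ out, (∫⋯∫⁻_S a ∩ insert i s, φ a ∂μ) x ^ w a := by
          simp_rw [hsplit]
          exact lintegral_mul_const _ (Finset.measurable_prod _ fun a ha =>
            (hmeas a (Finset.mem_filter.1 ha).1).pow_const _)
      _ ≤ _ := by
          rw [← Finset.prod_filter_mul_prod_filter_not T (fun a => i ∈ S a)]
          gcongr

end Finner

lemma prod_rpow_inv_card_le_inv_card_mul_sum {α : Type*} {T : Finset α} (hT : T.Nonempty)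
    (z : α → ℝ≥0∞) :
    ∏ a ∈ T, z a ^ (T.card : ℝ)⁻¹ ≤ (T.card : ℝ≥0∞)⁻¹ * ∑ a ∈ T, z a := by
  have hcard : T.card ≠ 0 := hT.card_ne_zero
  by_cases htop : ∃ a ∈ T, z a = ∞
  · rw [ENNReal.sum_eq_top.2 htop, ENNReal.mul_top (by simp)]
    exact le_top
  · push Not at htop
    have hamgm := NNReal.geom_mean_le_arith_mean_weighted T (fun _ => (T.card : NNReal)⁻¹)
      (fun a => (z a).toNNReal) (by simp [hcard])
    calc ∏ a ∈ T, z a ^ (T.card : ℝ)⁻¹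
        = ↑(∏ a ∈ T, (z a).toNNReal ^ (((T.card : NNReal)⁻¹ : NNReal) : ℝ)) := by
          push_cast
          refine Finset.prod_congr rfl fun a ha => ?_
          rw [ENNReal.coe_rpow_of_nonneg _ (by positivity), ENNReal.coe_toNNReal (htop a ha)]
      _ ≤ ↑(∑ a ∈ T, (T.card : NNReal)⁻¹ * (z a).toNNReal) := ENNReal.coe_le_coe.2 hamgm
      _ = (T.card : ℝ≥0∞)⁻¹ * ∑ a ∈ T, z a := by
          rw [← Finset.mul_sum]
          push_cast [ENNReal.coe_inv (Nat.cast_ne_zero.2 hcard)]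
          exact congrArg _ (Finset.sum_congr rfl fun a ha => ENNReal.coe_toNNReal (htop a ha))

section CoordinateShadows

variable {n k : ℕ} {F G : (Fin n → ℝ) → ℝ≥0∞}

/-- The integral of the projection of `F` onto the coordinate subspace `ℝ^I`. -/
def coordShadow {n : ℕ} (I : Finset (Fin n)) (F : (Fin n → ℝ) → ℝ≥0∞) : ℝ≥0∞ :=
  (∫⋯∫⁻_I, supMarginal Iᶜ F) 0

lemma le_supMarginal (J : Finset (Fin n)) (F : (Fin n → ℝ) → ℝ≥0∞) (x : Fin n → ℝ) :
    F x ≤ supMarginal J F x :=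
  le_iSup_of_le x (by rw [Finset.piecewise_same])

lemma dependsOn_supMarginal_compl (I : Finset (Fin n)) (F : (Fin n → ℝ) → ℝ≥0∞) :
    DependsOn (supMarginal Iᶜ F) I := by
  intro x y hxy
  refine iSup_congr fun z => congrArg F (funext fun j => ?_)
  by_cases hj : j ∈ I <;> simp [hj, hxy]

lemma choose_mul_eq_mul_choose_pred (hk : 1 ≤ k) (hkn : k ≤ n) :
    n.choose k * k = n * (n - 1).choose (k - 1) := by
  obtain ⟨k, rfl⟩ := Nat.exists_eq_add_of_le' hk
  obtain ⟨n, rfl⟩ := Nat.exists_eq_add_of_le' (hk.trans hkn)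
  exact (Nat.add_one_mul_choose_eq n k).symm

lemma card_filter_mem_powersetCard_univ (hk : 1 ≤ k) (i : Fin n) :
    (({I ∈ Finset.powersetCard k Finset.univ | i ∈ I} : Finset (Finset (Fin n)))).card =
      (n - 1).choose (k - 1) := by
  have h := Finset.card_filter_powersetCard_subset {i} (Finset.univ : Finset (Fin n)) k
    (by simp) (by simpa using hk)
  simpa using h

lemma lintegral_rpow_le_prod_coordShadow (hk : 1 ≤ k) (hkn : k ≤ n)
    (hF : HasSigmaCompactSuperlevels F) :
    ∫⁻ x, F x ^ ((n : ℝ) / k) ≤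
      ∏ I ∈ Finset.powersetCard k Finset.univ,
        coordShadow I F ^ (((n - 1).choose (k - 1) : ℝ)⁻¹) := by
  set m := (n - 1).choose (k - 1)
  have hm0 : (m : ℝ) ≠ 0 := by exact_mod_cast (Nat.choose_pos (by omega)).ne'
  have hk0 : (k : ℝ) ≠ 0 := by positivity
  have hchoose : (n.choose k : ℝ) * k = n * m := by
    exact_mod_cast choose_mul_eq_mul_choose_pred hk hkn
  have hfinner := lmarginal_prod_rpow_le (μ := fun _ : Fin n => (volume : Measure ℝ))
    (T := Finset.powersetCard k Finset.univ) (S := fun I => I) (w := fun _ => (m : ℝ)⁻¹)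
    (φ := fun I => supMarginal Iᶜ F) (fun _ _ => by positivity)
    (fun i => by rw [Finset.sum_const, card_filter_mem_powersetCard_univ hk, nsmul_eq_mul,
      mul_inv_cancel₀ hm0])
    (fun I _ => (hF.supMarginal Iᶜ).measurable)
    (fun I _ => dependsOn_supMarginal_compl I F) Finset.univ 0
  simp only [Finset.inter_univ, lmarginal_univ] at hfinner
  refine (lintegral_mono fun x => ?_).trans hfinner
  calc F x ^ ((n : ℝ) / k)
      = ∏ _I ∈ Finset.powersetCard k (Finset.univ : Finset (Fin n)), F x ^ (m : ℝ)⁻¹ := by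
        rw [Finset.prod_const, Finset.card_powersetCard, Finset.card_univ, Fintype.card_fin,
          ← ENNReal.rpow_natCast, ← ENNReal.rpow_mul]
        congr 1
        field_simp
        linarith
    _ ≤ _ := Finset.prod_le_prod' fun I _ => by gcongr; exact le_supMarginal _ _ _

lemma lintegral_rpow_rpow_le_inv_choose_mul_sum (hk : 1 ≤ k) (hkn : k ≤ n)
    (hF : HasSigmaCompactSuperlevels F) :
    (∫⁻ x, F x ^ ((n : ℝ) / k)) ^ ((k : ℝ) / n) ≤
      (n.choose k : ℝ≥0∞)⁻¹ * ∑ I ∈ Finset.powersetCard k Finset.univ, coordShadow I F := by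
  set T := Finset.powersetCard k (Finset.univ : Finset (Fin n))
  have hT : T.card = n.choose k := by simp [T]
  have hTne : T.Nonempty := Finset.powersetCard_nonempty.2 (by simpa using hkn)
  have hm0 : ((n - 1).choose (k - 1) : ℝ) ≠ 0 := by
    exact_mod_cast (Nat.choose_pos (by omega)).ne'
  have hN0 : (n.choose k : ℝ) ≠ 0 := by exact_mod_cast (Nat.choose_pos hkn).ne'
  have hn0 : (n : ℝ) ≠ 0 := by exact_mod_cast (by omega : n ≠ 0)
  have hchoose : (n.choose k : ℝ) * k = n * (n - 1).choose (k - 1) := by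
    exact_mod_cast choose_mul_eq_mul_choose_pred hk hkn
  calc (∫⁻ x, F x ^ ((n : ℝ) / k)) ^ ((k : ℝ) / n)
      ≤ (∏ I ∈ T, coordShadow I F ^ (((n - 1).choose (k - 1) : ℝ)⁻¹)) ^ ((k : ℝ) / n) := by
        gcongr
        exact lintegral_rpow_le_prod_coordShadow hk hkn hF
    _ = ∏ I ∈ T, coordShadow I F ^ (T.card : ℝ)⁻¹ := by
        rw [← ENNReal.prod_rpow_of_nonneg (by positivity)]
        refine Finset.prod_congr rfl fun I _ => ?_
        rw [← ENNReal.rpow_mul, hT]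
        congr 1
        field_simp
        linarith
    _ ≤ (n.choose k : ℝ≥0∞)⁻¹ * ∑ I ∈ T, coordShadow I F :=
        hT ▸ prod_rpow_inv_card_le_inv_card_mul_sum hTne _

lemma boxSup_univ_mul_rpow_le (hk : 1 ≤ k) (hkn : k < n) (hG : ELogConcave G) {p : Fin n → ℝ}
    {r : ℝ} {c : ℝ≥0∞} (hc : ∀ y ∈ Icc p (p + fun _ => r), c ≤ G y) (q : Fin n → ℝ) :
    boxSup (r * (n - k) / k) Finset.univ G q * c ^ (((n : ℝ) - k) / k) ≤
      G (((k : ℝ) / n) • q + (((n : ℝ) - k) / n) • p) ^ ((n : ℝ) / k) := by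
  have hk0 : (0 : ℝ) < k := by exact_mod_cast hk
  have hn0 : (0 : ℝ) < n := by exact_mod_cast (by omega : 0 < n)
  have hnk : (0 : ℝ) < n - k := sub_pos.2 (by exact_mod_cast hkn)
  rw [boxSup, ENNReal.iSup_mul]
  refine iSup_le fun ⟨u, hu0, hut⟩ => ?_
  set y := q - Finset.univ.piecewise u 0
  set w := p + ((k : ℝ) / (n - k)) • u
  have hw : c ≤ G w := hc w ⟨le_add_of_nonneg_right (smul_nonneg (by positivity) hu0),
    add_le_add_right (fun i => ?_) p⟩
  · calc G y * c ^ (((n : ℝ) - k) / k)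
        ≤ G y * G w ^ (((n : ℝ) - k) / k) := by gcongr
      _ = (G y ^ ((k : ℝ) / n) * G w ^ (((n : ℝ) - k) / n)) ^ ((n : ℝ) / k) := by
        rw [ENNReal.mul_rpow_of_nonneg _ _ (by positivity), ← ENNReal.rpow_mul, ← ENNReal.rpow_mul,
          div_mul_div_cancel₀ hn0.ne', div_mul_div_cancel₀ hn0.ne', div_self hk0.ne',
          ENNReal.rpow_one]
      _ ≤ G (((k : ℝ) / n) • y + (((n : ℝ) - k) / n) • w) ^ ((n : ℝ) / k) := by
        gcongr
        exact hG y w _ _ (by positivity) (by positivity) (by field_simp; ring)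
      _ = G (((k : ℝ) / n) • q + (((n : ℝ) - k) / n) • p) ^ ((n : ℝ) / k) := by
        congr 2
        ext i
        simp only [y, w, Finset.piecewise_univ, Pi.add_apply, Pi.sub_apply, Pi.smul_apply,
          smul_eq_mul]
        field_simp
        ring
  · calc (k : ℝ) / (n - k) * u i ≤ k / (n - k) * (r * (n - k) / k) := by gcongr; exact hut i
      _ = r := by field_simp

lemma pow_mul_sum_coordShadow_le {t : ℝ} (ht : 0 ≤ t) (hG : HasSigmaCompactSuperlevels G) :
    ENNReal.ofReal t ^ (n - k) * ∑ I ∈ Finset.powersetCard k Finset.univ, coordShadow I G ≤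
      ∫⁻ x, boxSup t Finset.univ G x := by
  have hbox := sum_powerset_lmarginal_supMarginal_le ht hG Finset.univ 0
  rw [lmarginal_univ] at hbox
  refine le_trans ?_ hbox
  rw [Finset.mul_sum]
  refine le_trans (le_of_eq (Finset.sum_congr rfl fun I hI => ?_))
    (Finset.sum_le_sum_of_subset fun I _ => Finset.mem_powerset.2 I.subset_univ)
  rw [← Finset.compl_eq_univ_sdiff, Finset.card_compl, (Finset.mem_powersetCard.1 hI).2,
    Fintype.card_fin]
  rfl

lemma pow_mul_sum_coordShadow_mul_le (hk : 1 ≤ k) (hkn : k < n)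
    (hG : HasSigmaCompactSuperlevels G) (hGlog : ELogConcave G) {p : Fin n → ℝ} {r : ℝ}
    (hr : 0 ≤ r) {c : ℝ≥0∞} (hc : ∀ y ∈ Icc p (p + fun _ => r), c ≤ G y) :
    ENNReal.ofReal (r * (n - k) / k) ^ (n - k) *
        (∑ I ∈ Finset.powersetCard k Finset.univ, coordShadow I G) * c ^ (((n : ℝ) - k) / k) ≤
      ENNReal.ofReal (((n : ℝ) / k) ^ n) * ∫⁻ x, G x ^ ((n : ℝ) / k) := by
  have : (0 : ℝ) < k := by exact_mod_cast hk
  have hn0 : (0 : ℝ) < n := by exact_mod_cast (by omega : 0 < n)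
  have hnk : (0 : ℝ) < n - k := sub_pos.2 (by exact_mod_cast hkn)
  set t := r * (n - k) / k
  calc _ ≤ (∫⁻ q, boxSup t Finset.univ G q) * c ^ (((n : ℝ) - k) / k) := by
        gcongr
        exact pow_mul_sum_coordShadow_le (by positivity) hG
    _ = ∫⁻ q, boxSup t Finset.univ G q * c ^ (((n : ℝ) - k) / k) :=
        (lintegral_mul_const _ (hG.boxSup _ _).measurable).symm
    _ ≤ ∫⁻ q, G (((k : ℝ) / n) • q + (((n : ℝ) - k) / n) • p) ^ ((n : ℝ) / k) :=
        lintegral_mono (boxSup_univ_mul_rpow_le hk hkn hGlog hc)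
    _ = ENNReal.ofReal (((n : ℝ) / k) ^ n) * ∫⁻ x, G x ^ ((n : ℝ) / k) := by
        rw [lintegral_comp_smul_add volume (fun x => G x ^ ((n : ℝ) / k)) (by positivity),
          Module.finrank_fin_fun, ← inv_pow, inv_div]

lemma pow_le_choose_mul_pow {j m : ℕ} (hjm : j ≤ m) : (m : ℝ) ^ j ≤ m.choose j * (j : ℝ) ^ j := by
  induction j generalizing m with
  | zero => simp
  | succ j ih =>
    obtain ⟨m, rfl⟩ := Nat.exists_eq_add_of_le' (show 1 ≤ m by omega)
    have hpascal : ((m : ℝ) + 1) * m.choose j = (m + 1).choose (j + 1) * ((j : ℝ) + 1) := by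
      exact_mod_cast Nat.add_one_mul_choose_eq m j
    have hstep : ((m : ℝ) + 1) ^ j ≤ m.choose j * ((j : ℝ) + 1) ^ j := by
      rcases j.eq_zero_or_pos with rfl | hj
      · simp
      have hjm' : (j : ℝ) ≤ m := by exact_mod_cast (by omega : j ≤ m)
      refine le_of_mul_le_mul_right ?_ (show (0 : ℝ) < (j : ℝ) ^ j by positivity)
      calc ((m : ℝ) + 1) ^ j * (j : ℝ) ^ j = (((m : ℝ) + 1) * j) ^ j := by rw [mul_pow]
        _ ≤ ((m : ℝ) * (j + 1)) ^ j := by gcongr ?_ ^ j; linarith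
        _ = (m : ℝ) ^ j * ((j : ℝ) + 1) ^ j := by rw [mul_pow]
        _ ≤ (m.choose j * (j : ℝ) ^ j) * ((j : ℝ) + 1) ^ j := by gcongr; exact ih (by omega)
        _ = _ := by ring
    push_cast
    calc ((m : ℝ) + 1) ^ (j + 1) = ((m : ℝ) + 1) * ((m : ℝ) + 1) ^ j := by ring
      _ ≤ ((m : ℝ) + 1) * (m.choose j * ((j : ℝ) + 1) ^ j) := by gcongr
      _ = (((m : ℝ) + 1) * m.choose j) * ((j : ℝ) + 1) ^ j := by ring
      _ = _ := by rw [hpascal]; ring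

lemma div_pow_le_exp_pow_mul_choose_mul (hk : 1 ≤ k) (hkn : k ≤ n) :
    ((n : ℝ) / k) ^ n ≤ Real.exp 1 ^ (n - k) * n.choose k * (((n : ℝ) - k) / k) ^ (n - k) := by
  have hk0 : (0 : ℝ) < k := by exact_mod_cast hk
  have hexp : ((n : ℝ) / k) ^ k ≤ Real.exp 1 ^ (n - k) := calc
    ((n : ℝ) / k) ^ k ≤ Real.exp (((n - k : ℕ) : ℝ) / k) ^ k := by
      gcongr
      refine le_trans (le_of_eq ?_) (Real.add_one_le_exp _)
      rw [Nat.cast_sub hkn]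
      field_simp
      ring
    _ = Real.exp 1 ^ (n - k) := by
      rw [← Real.exp_nat_mul, ← Real.exp_nat_mul, mul_div_cancel₀ _ hk0.ne', mul_one]
  have hchoose : ((n : ℝ) / k) ^ (n - k) ≤ n.choose k * (((n : ℝ) - k) / k) ^ (n - k) := by
    rw [← Nat.choose_symm hkn, ← Nat.cast_sub hkn, div_pow, div_pow, mul_div_assoc']
    gcongr
    exact pow_le_choose_mul_pow (Nat.sub_le n k)
  calc ((n : ℝ) / k) ^ n = ((n : ℝ) / k) ^ k * ((n : ℝ) / k) ^ (n - k) := by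
        rw [← pow_add, Nat.add_sub_cancel' hkn]
    _ ≤ Real.exp 1 ^ (n - k) * (n.choose k * (((n : ℝ) - k) / k) ^ (n - k)) := by gcongr
    _ = _ := by ring

lemma sum_coordShadow_mul_rpow_le (hk : 1 ≤ k) (hkn : k < n)
    (hG : HasSigmaCompactSuperlevels G) (hGlog : ELogConcave G) {p : Fin n → ℝ} {c : ℝ≥0∞}
    (hc : ∀ y ∈ Icc p (p + 1), c ≤ G y) :
    (∑ I ∈ Finset.powersetCard k Finset.univ, coordShadow I G) * c ^ (((n : ℝ) - k) / k) ≤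
      ENNReal.ofReal (Real.exp 1 ^ (n - k) * n.choose k) * ∫⁻ x, G x ^ ((n : ℝ) / k) := by
  have : (0 : ℝ) < k := by exact_mod_cast hk
  have hnk : (0 : ℝ) < n - k := sub_pos.2 (by exact_mod_cast hkn)
  set t : ℝ := (n - k) / k
  have ht : 0 < t := by positivity
  have hbox := pow_mul_sum_coordShadow_mul_le hk hkn hG hGlog zero_le_one hc
  rw [one_mul] at hbox
  rw [← ENNReal.mul_le_mul_iff_right (a := ENNReal.ofReal t ^ (n - k)) (by simp [ht]) (by simp),
    ← mul_assoc, ← mul_assoc]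
  refine hbox.trans ?_
  gcongr
  rw [← ENNReal.ofReal_pow ht.le, ← ENNReal.ofReal_mul (by positivity), mul_comm (t ^ _)]
  exact ENNReal.ofReal_le_ofReal (div_pow_le_exp_pow_mul_choose_mul hk hkn.le)

lemma lintegral_rpow_rpow_mul_le_of_coordShadow_le (hk : 1 ≤ k) (hkn : k < n)
    (hF : HasSigmaCompactSuperlevels F) (hG : HasSigmaCompactSuperlevels G)
    (hGlog : ELogConcave G) {p : Fin n → ℝ} {c : ℝ≥0∞} (hc : ∀ y ∈ Icc p (p + 1), c ≤ G y)
    (hFG : ∀ I : Finset (Fin n), I.card = k → coordShadow I F ≤ coordShadow I G) :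
    (∫⁻ x, F x ^ ((n : ℝ) / k)) ^ ((k : ℝ) / n) * c ^ (((n : ℝ) - k) / k) ≤
      ENNReal.ofReal (Real.exp 1 ^ (n - k)) * ∫⁻ x, G x ^ ((n : ℝ) / k) := by
  have hchoose : (n.choose k : ℝ≥0∞) ≠ 0 := by exact_mod_cast (Nat.choose_pos hkn.le).ne'
  calc (∫⁻ x, F x ^ ((n : ℝ) / k)) ^ ((k : ℝ) / n) * c ^ (((n : ℝ) - k) / k)
      ≤ (n.choose k : ℝ≥0∞)⁻¹ * (∑ I ∈ Finset.powersetCard k Finset.univ, coordShadow I F) *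
          c ^ (((n : ℝ) - k) / k) := by
        gcongr
        exact lintegral_rpow_rpow_le_inv_choose_mul_sum hk hkn.le hF
    _ ≤ (n.choose k : ℝ≥0∞)⁻¹ * (∑ I ∈ Finset.powersetCard k Finset.univ, coordShadow I G) *
          c ^ (((n : ℝ) - k) / k) := by
        gcongr with I hI
        exact hFG I (Finset.mem_powersetCard.1 hI).2
    _ ≤ (n.choose k : ℝ≥0∞)⁻¹ *
          (ENNReal.ofReal (Real.exp 1 ^ (n - k) * n.choose k) * ∫⁻ x, G x ^ ((n : ℝ) / k)) := by
        rw [mul_assoc]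
        exact mul_le_mul_right (sum_coordShadow_mul_rpow_le hk hkn hG hGlog hc) _
    _ = (n.choose k : ℝ≥0∞)⁻¹ * n.choose k *
          (ENNReal.ofReal (Real.exp 1 ^ (n - k)) * ∫⁻ x, G x ^ ((n : ℝ) / k)) := by
        rw [ENNReal.ofReal_mul (by positivity), ENNReal.ofReal_natCast]
        ring
    _ = _ := by rw [ENNReal.inv_mul_cancel hchoose (by simp), one_mul]

lemma MemEQ0.coordShadow_ne_top (hF : MemEQ0 F) {I : Finset (Fin n)} (hI : I.Nonempty)
    (hIn : I ≠ Finset.univ) : coordShadow I F ≠ ∞ := by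
  set k := I.card with hkI
  have hk : 1 ≤ k := hI.card_pos
  have hkn : k < n := by simpa using (Finset.card_lt_iff_ne_univ I).2 hIn
  have hk0 : (0 : ℝ) < k := by exact_mod_cast hk
  have hnk : (k : ℝ) < n := by exact_mod_cast hkn
  obtain ⟨x₀, r, δ, hr, hδ0, hδtop, hball⟩ :=
    hF.logConcave.exists_ball_le hF.measurable hF.lintegral_ne_zero
  have hcube : ∀ y ∈ Icc x₀ (x₀ + fun _ => r / 2), δ ≤ F y := fun y hy => by
    refine hball y ((dist_pi_lt_iff hr).2 fun i => ?_)
    have hl := hy.1 i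
    have hu := hy.2 i
    rw [Pi.add_apply] at hu
    rw [Real.dist_eq, abs_lt]
    constructor <;> linarith
  have hbox := pow_mul_sum_coordShadow_mul_le hk hkn
    (.of_upperSemicontinuous hF.upperSemicontinuous) hF.logConcave (by positivity) hcube
  have hrhs : ENNReal.ofReal (((n : ℝ) / k) ^ n) * ∫⁻ x, F x ^ ((n : ℝ) / k) ≠ ∞ :=
    ENNReal.mul_ne_top ENNReal.ofReal_ne_top
      (hF.rpow ((one_le_div hk0).2 hnk.le)).lintegral_ne_top
  refine ne_top_of_le_ne_top (fun htop => ?_) (Finset.single_le_sum (f := (coordShadow · F))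
    (fun _ _ => zero_le) (Finset.mem_powersetCard.2 ⟨Finset.subset_univ I, hkI.symm⟩))
  rw [htop, ENNReal.mul_top, ENNReal.top_mul, top_le_iff] at hbox
  · exact hrhs hbox
  · simp [ENNReal.rpow_eq_zero_iff, hδ0, hδtop]
  · have : 0 < r / 2 * (n - k) / k := by
      have := sub_pos.2 hnk
      positivity
    simp [this]

end CoordinateShadows

lemma exists_linearEquiv_map_eq {K V W : Type*} [Field K] [AddCommGroup V] [Module K V]
    [AddCommGroup W] [Module K W] [FiniteDimensional K V] [FiniteDimensional K W]
    (hVW : Module.finrank K V = Module.finrank K W) {p : Submodule K V} {q : Submodule K W}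
    (hpq : Module.finrank K p = Module.finrank K q) :
    ∃ e : V ≃ₗ[K] W, p.map e.toLinearMap = q := by
  obtain ⟨p', hp⟩ := p.exists_isCompl
  obtain ⟨q', hq⟩ := q.exists_isCompl
  have hpq' : Module.finrank K p' = Module.finrank K q' := by
    have := Submodule.finrank_add_eq_of_isCompl hp
    have := Submodule.finrank_add_eq_of_isCompl hq
    omega
  let e := LinearEquiv.ofFinrankEq p q hpq
  let e' := LinearEquiv.ofFinrankEq p' q' hpq'
  refine ⟨(p.prodEquivOfIsCompl p' hp).symm ≪≫ₗ (e.prodCongr e') ≪≫ₗ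
    q.prodEquivOfIsCompl q' hq, ?_⟩
  refine Submodule.eq_of_le_of_finrank_eq ?_ (by rw [LinearEquiv.finrank_map_eq, hpq])
  rintro _ ⟨x, hx, rfl⟩
  have hsymm := p.prodEquivOfIsCompl_symm_apply_left p' hp ⟨x, hx⟩
  simp [hsymm]

section Shadow

variable {E V : Type*} [NormedAddCommGroup E] [InnerProductSpace ℝ E]

/-- The projection `P_H F` of a function `F` to a subspace `H`. -/
def shadow (H : Submodule ℝ E) (F : E → ℝ≥0∞) (y : H) : ℝ≥0∞ :=
  ⨆ z : Hᗮ, F (y + z)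

section Fiber

variable [AddCommGroup V] [Module ℝ V] {π : E →ₗ[ℝ] V} {H : Submodule ℝ E}

lemma iSup_fiber_eq_shadow (hH : LinearMap.ker π = Hᗮ) (F : E → ℝ≥0∞) (y : H) :
    ⨆ (x : E) (_ : π x = π y), F x = shadow H F y := by
  refine le_antisymm (iSup₂_le fun x hx => ?_) (iSup_le fun z => ?_)
  · have hz : x - y ∈ Hᗮ := by rw [← hH, LinearMap.mem_ker, map_sub, hx, sub_self]
    exact le_iSup_of_le ⟨x - y, hz⟩ (by rw [add_sub_cancel])
  · have hz : π z = 0 := by rw [← LinearMap.mem_ker, hH]; exact z.2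
    exact le_iSup₂_of_le ((y : E) + z) (by rw [map_add, hz, add_zero]) le_rfl

end Fiber

variable {n : ℕ}

/-- The coordinates with index in `I` with respect to the parametrization `A`. -/
def coordMap (A : (Fin n → ℝ) ≃L[ℝ] E) (I : Finset (Fin n)) : E →ₗ[ℝ] (I → ℝ) :=
  LinearMap.funLeft ℝ ℝ ((↑) : I → Fin n) ∘ₗ A.symm.toLinearEquiv.toLinearMap

lemma coordMap_surjective (A : (Fin n → ℝ) ≃L[ℝ] E) (I : Finset (Fin n)) :
    Function.Surjective (coordMap A I) :=
  (LinearMap.funLeft_surjective_of_injective ℝ ℝ _ Subtype.val_injective).comp A.symm.surjective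

lemma coordShadow_comp_eq_lintegral_iSup (A : (Fin n → ℝ) ≃L[ℝ] E) (I : Finset (Fin n))
    (F : E → ℝ≥0∞) : coordShadow I (fun x => F (A x)) =
      ∫⁻ v : I → ℝ, ⨆ (x : E) (_ : coordMap A I x = v), F x := by
  refine lintegral_congr fun v => le_antisymm (iSup_le fun z => ?_) (iSup₂_le fun x hx => ?_)
  · refine le_iSup₂_of_le (A _) ?_ le_rfl
    ext i
    simp [coordMap, LinearMap.funLeft_apply, Function.updateFinset]
  · refine le_iSup_of_le (A.symm x) (le_of_eq ?_)
    have hpiece : Iᶜ.piecewise (A.symm x) (Function.updateFinset 0 I v) = A.symm x := by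
      ext i
      by_cases hi : i ∈ I
      · simp [hi, Function.updateFinset, ← hx, coordMap, LinearMap.funLeft_apply]
      · simp [hi]
    simp only [hpiece, A.apply_symm_apply]

variable [FiniteDimensional ℝ E]

lemma HasSigmaCompactSuperlevels.shadow {F : E → ℝ≥0∞} (hF : HasSigmaCompactSuperlevels F)
    (H : Submodule ℝ E) : HasSigmaCompactSuperlevels (shadow H F) :=
  hF.iSup_comp (h := fun (y : H) (z : Hᗮ) => (y : E) + z) (by fun_prop)

lemma exists_linearEquiv_eq_of_ker_eq_orthogonal [AddCommGroup V] [Module ℝ V] {π : E →ₗ[ℝ] V}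
    {H : Submodule ℝ E} (hπ : Function.Surjective π)
    (hH : LinearMap.ker π = Hᗮ) : ∃ T : H ≃ₗ[ℝ] V, ∀ y : H, T y = π y := by
  refine ⟨.ofBijective (π.domRestrict H) ⟨?_, fun v => ?_⟩, fun y => rfl⟩
  · rw [← LinearMap.ker_eq_bot, LinearMap.ker_domRestrict, hH,
      ← Submodule.disjoint_iff_comap_eq_bot]
    exact H.orthogonal_disjoint
  · obtain ⟨x, rfl⟩ := hπ v
    refine ⟨H.orthogonalProjectionOnto x, ?_⟩
    have hker : x - H.orthogonalProjectionOnto x ∈ LinearMap.ker π :=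
      hH ▸ Submodule.sub_starProjection_mem_orthogonal x
    rw [LinearMap.mem_ker, map_sub, sub_eq_zero] at hker
    exact hker.symm

lemma exists_ker_coordMap_eq_orthogonal {H : Submodule ℝ E} {I : Finset (Fin n)}
    (hn : Module.finrank ℝ E = n) (hI : I.card = Module.finrank ℝ H) :
    ∃ A : (Fin n → ℝ) ≃L[ℝ] E, LinearMap.ker (coordMap A I) = Hᗮ := by
  have hfin := LinearMap.finrank_range_add_finrank_ker (LinearMap.funLeft ℝ ℝ ((↑) : I → Fin n))
  rw [LinearMap.range_eq_top.2 (LinearMap.funLeft_surjective_of_injective ℝ ℝ _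
    Subtype.val_injective), finrank_top] at hfin
  have horth := H.finrank_add_finrank_orthogonal
  simp only [Module.finrank_fintype_fun_eq_card, Fintype.card_coe, Fintype.card_fin] at hfin
  obtain ⟨e, he⟩ := exists_linearEquiv_map_eq (K := ℝ) (V := Fin n → ℝ) (W := E)
    (p := LinearMap.ker (LinearMap.funLeft ℝ ℝ ((↑) : I → Fin n))) (q := Hᗮ)
    (by rw [hn, Module.finrank_fin_fun]) (by omega)
  refine ⟨e.toContinuousLinearEquiv, ?_⟩
  rw [← he, Submodule.map_equiv_eq_comap_symm]
  rfl

variable [MeasurableSpace E] [BorelSpace E]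

lemma exists_lintegral_iSup_fiber_eq [NormedAddCommGroup V] [NormedSpace ℝ V] [MeasurableSpace V]
    [BorelSpace V] (ν : Measure V) [ν.IsAddHaarMeasure] {π : E →ₗ[ℝ] V} {H : Submodule ℝ E}
    (hπ : Function.Surjective π) (hH : LinearMap.ker π = Hᗮ) :
    ∃ c : ℝ≥0∞, c ≠ 0 ∧ c ≠ ∞ ∧ ∀ F : E → ℝ≥0∞,
      ∫⁻ v, ⨆ (x : E) (_ : π x = v), F x ∂ν = c * ∫⁻ y : H, shadow H F y := by
  obtain ⟨T, hT⟩ := exists_linearEquiv_eq_of_ker_eq_orthogonal hπ hH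
  obtain ⟨c, hc0, hctop, hc⟩ := exists_lintegral_comp_continuousLinearEquiv ν
    (volume : Measure H) T.toContinuousLinearEquiv.symm
  refine ⟨c, hc0, hctop, fun F => ?_⟩
  rw [← hc (shadow H F)]
  refine lintegral_congr fun v => ?_
  have hv : π (T.symm v) = v := by rw [← hT, T.apply_symm_apply]
  change _ = shadow H F (T.symm v)
  rw [← iSup_fiber_eq_shadow hH, hv]

lemma exists_coordShadow_comp_eq (A : (Fin n → ℝ) ≃L[ℝ] E) {I : Finset (Fin n)}
    {H : Submodule ℝ E} (hH : LinearMap.ker (coordMap A I) = Hᗮ) :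
    ∃ c : ℝ≥0∞, c ≠ 0 ∧ c ≠ ∞ ∧ ∀ F : E → ℝ≥0∞,
      coordShadow I (fun x => F (A x)) = c * ∫⁻ y : H, shadow H F y := by
  simp only [coordShadow_comp_eq_lintegral_iSup]
  exact exists_lintegral_iSup_fiber_eq volume (coordMap_surjective A I) hH

lemma coordShadow_comp_le_of_lintegral_shadow_le {F G : E → ℝ≥0∞} {k : ℕ}
    (hFG : ∀ H : Submodule ℝ E, Module.finrank ℝ H = k →
      ∫⁻ y : H, shadow H F y ≤ ∫⁻ y : H, shadow H G y)
    (A : (Fin n → ℝ) ≃L[ℝ] E) {I : Finset (Fin n)} (hI : I.card = k) :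
    coordShadow I (fun x => F (A x)) ≤ coordShadow I (fun x => G (A x)) := by
  have hH : LinearMap.ker (coordMap A I) = (LinearMap.ker (coordMap A I))ᗮᗮ :=
    (Submodule.orthogonal_orthogonal _).symm
  obtain ⟨T, -⟩ := exists_linearEquiv_eq_of_ker_eq_orthogonal (coordMap_surjective A I) hH
  obtain ⟨c, -, -, hc⟩ := exists_coordShadow_comp_eq A hH
  rw [hc, hc]
  refine mul_le_mul_right (hFG _ ?_) c
  rw [T.finrank_eq, Module.finrank_fintype_fun_eq_card, Fintype.card_coe, hI]

lemma MemEQ0.lintegral_shadow_ne_top {F : E → ℝ≥0∞} (hF : MemEQ0 F) {H : Submodule ℝ E}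
    (hH0 : 0 < Module.finrank ℝ H) (hH1 : Module.finrank ℝ H < Module.finrank ℝ E) :
    ∫⁻ y : H, shadow H F y ≠ ∞ := by
  set n := Module.finrank ℝ E with hn
  obtain ⟨I, -, hI⟩ := Finset.exists_subset_card_eq (s := (Finset.univ : Finset (Fin n)))
    (n := Module.finrank ℝ H) (by simpa using hH1.le)
  obtain ⟨A, hA⟩ := exists_ker_coordMap_eq_orthogonal hn.symm hI
  obtain ⟨c, hc0, -, hc⟩ := exists_coordShadow_comp_eq A hA
  have hI0 : I.Nonempty := Finset.card_pos.1 (hI ▸ hH0)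
  have hI1 : I ≠ Finset.univ := (Finset.card_lt_iff_ne_univ I).1 (by simpa [hI] using hH1)
  have hfin := (hF.comp_continuousLinearEquiv A).coordShadow_ne_top hI0 hI1
  rw [hc] at hfin
  exact fun htop => hfin (by rw [htop, ENNReal.mul_top hc0])

end Shadow

lemma rpow_le_mul_of_rpow_mul_rpow_le {θ : ℝ} (hθ0 : 0 ≤ θ) (hθ1 : θ ≤ 1) {X Y B S T : ℝ≥0∞}
    (hT0 : T ≠ 0) (hTtop : T ≠ ∞) (hX : X ^ θ * T ^ (1 - θ) ≤ B * Y) (hY : Y ≤ S * T) :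
    X ^ θ ≤ B * S ^ (1 - θ) * Y ^ θ := by
  have hθ : 0 ≤ 1 - θ := sub_nonneg.2 hθ1
  refine (ENNReal.mul_le_mul_iff_left (ENNReal.rpow_pos hT0.bot_lt hTtop).ne'
    (ENNReal.rpow_ne_top_of_nonneg hθ hTtop)).1 ?_
  calc X ^ θ * T ^ (1 - θ) ≤ B * Y := hX
    _ = B * (Y ^ θ * Y ^ (1 - θ)) := by
        rw [← ENNReal.rpow_add_of_nonneg _ _ hθ0 hθ, add_sub_cancel, ENNReal.rpow_one]
    _ ≤ B * (Y ^ θ * (S * T) ^ (1 - θ)) := by gcongr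
    _ = B * S ^ (1 - θ) * Y ^ θ * T ^ (1 - θ) := by
        rw [ENNReal.mul_rpow_of_nonneg _ _ hθ]
        ring

lemma ofReal_exp_pow_mul_rpow_eq {n k : ℕ} (hn : n ≠ 0) (hkn : k ≤ n) :
    ENNReal.ofReal (Real.exp 1 ^ (n - k)) *
        ENNReal.ofReal ((16 * √n) ^ n) ^ (1 - (k : ℝ) / n) =
      ENNReal.ofReal ((16 * Real.exp 1 * √n) ^ (n - k)) := by
  have hexp : (n : ℝ) * (1 - k / n) = (n - k : ℕ) := by
    rw [Nat.cast_sub hkn]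
    field_simp
  have hexp0 : 0 ≤ 1 - (k : ℝ) / n :=
    sub_nonneg.2 (div_le_one_of_le₀ (by exact_mod_cast hkn) n.cast_nonneg)
  rw [ENNReal.ofReal_rpow_of_nonneg (by positivity) hexp0, ← ENNReal.ofReal_mul (by positivity),
    ← Real.rpow_natCast _ n, ← Real.rpow_mul (by positivity), hexp, Real.rpow_natCast, ← mul_pow]
  congr 2
  ring

lemma lintegral_rpow_rpow_le_of_coordShadow_le {n k : ℕ} (hk : 1 ≤ k) (hkn : k < n)
    {F G : (Fin n → ℝ) → ℝ≥0∞} (hF : HasSigmaCompactSuperlevels F)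
    (hG : HasSigmaCompactSuperlevels G) (hGlog : ELogConcave G) {τ : ℝ} (hτ : 0 < τ)
    {p : Fin n → ℝ} (hcube : ∀ y ∈ Icc p (p + 1), ENNReal.ofReal τ ≤ G y ^ ((n : ℝ) / k))
    (hvol : ∫⁻ y, G y ^ ((n : ℝ) / k) ≤ ENNReal.ofReal ((16 * √n) ^ n * τ))
    (hFG : ∀ I : Finset (Fin n), I.card = k → coordShadow I F ≤ coordShadow I G) :
    (∫⁻ x, F x ^ ((n : ℝ) / k)) ^ ((k : ℝ) / n) ≤
      ENNReal.ofReal ((16 * Real.exp 1 * √n) ^ (n - k)) *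
        (∫⁻ x, G x ^ ((n : ℝ) / k)) ^ ((k : ℝ) / n) := by
  have hk0 : (0 : ℝ) < k := by exact_mod_cast hk
  have hn0 : (0 : ℝ) < n := by exact_mod_cast hk.trans hkn.le
  have hc : ∀ y ∈ Icc p (p + 1), ENNReal.ofReal τ ^ ((k : ℝ) / n) ≤ G y := fun y hy => by
    rw [← inv_div, ENNReal.rpow_inv_le_iff (by positivity)]
    exact hcube y hy
  have hcore := lintegral_rpow_rpow_mul_le_of_coordShadow_le hk hkn hF hG hGlog hc hFG
  rw [← ENNReal.rpow_mul, show (k : ℝ) / n * ((n - k) / k) = 1 - k / n by field_simp] at hcore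
  rw [ENNReal.ofReal_mul (by positivity)] at hvol
  rw [← ofReal_exp_pow_mul_rpow_eq (by omega) hkn.le]
  exact rpow_le_mul_of_rpow_mul_rpow_le (by positivity)
    ((div_le_one hn0).2 (by exact_mod_cast hkn.le)) (by simpa using hτ) ENNReal.ofReal_ne_top
    hcore hvol

theorem functional_shephard_lp_general {E : Type*} [NormedAddCommGroup E] [InnerProductSpace ℝ E]
    [FiniteDimensional ℝ E] [MeasurableSpace E] [BorelSpace E] {n k : ℕ}
    (hn : Module.finrank ℝ E = n) (hk : 1 ≤ k) (hkn : k < n) {F G : E → ℝ≥0∞}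
    (hF : HasSigmaCompactSuperlevels F) (hG : MemEQ0 G)
    (hFG : ∀ H : Submodule ℝ E, Module.finrank ℝ H = k →
      ∫⁻ y : H, shadow H F y ≤ ∫⁻ y : H, shadow H G y) :
    (∫⁻ x, F x ^ ((n : ℝ) / k)) ^ ((k : ℝ) / n) ≤
      ENNReal.ofReal ((16 * Real.exp 1 * √n) ^ (n - k)) *
        (∫⁻ x, G x ^ ((n : ℝ) / k)) ^ ((k : ℝ) / n) := by
  have hp : 1 ≤ (n : ℝ) / k := (one_le_div (by positivity)).2 (by exact_mod_cast hkn.le)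
  let e : (Fin n → ℝ) ≃L[ℝ] E := .ofFinrankEq (by rw [hn, Module.finrank_fin_fun])
  have hGp := (hG.rpow hp).comp_continuousLinearEquiv e
  obtain ⟨τ, B, p, hτ, hcube, hvol⟩ := hGp.logConcave.exists_cube (by omega) hGp.measurable
    hGp.lintegral_ne_zero hGp.lintegral_ne_top
  let A := B.trans e
  have hFA : HasSigmaCompactSuperlevels fun x => F (A x) := by
    simpa using hF.iSup_comp (P := Unit) (h := fun x _ => A x) (by fun_prop)
  have hGA := hG.comp_continuousLinearEquiv A
  have hcoord := lintegral_rpow_rpow_le_of_coordShadow_le hk hkn hFA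
    (.of_upperSemicontinuous hGA.upperSemicontinuous) hGA.logConcave hτ hcube hvol
    fun I hI => coordShadow_comp_le_of_lintegral_shadow_le hFG A hI
  obtain ⟨d, hd0, hdtop, hd⟩ := exists_lintegral_comp_continuousLinearEquiv volume volume A
  have hθ : 0 ≤ (k : ℝ) / n := by positivity
  rwa [hd fun x => F x ^ ((n : ℝ) / k), hd fun x => G x ^ ((n : ℝ) / k),
    ENNReal.mul_rpow_of_nonneg _ _ hθ, ENNReal.mul_rpow_of_nonneg _ _ hθ, mul_left_comm,
    ENNReal.mul_le_mul_iff_right (ENNReal.rpow_pos hd0.bot_lt hdtop).ne'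
      (ENNReal.rpow_ne_top_of_nonneg hθ hdtop)] at hcoord

namespace MemQ0

variable {n : ℕ} {f : Eucl n → ℝ}

lemma memEQ0 (hf : MemQ0 f) : MemEQ0 fun x => ENNReal.ofReal (f x) := by
  obtain ⟨h0, hlog, husc, hint, hpos⟩ := hf
  refine ⟨fun x y a b ha hb hab => ?_, ENNReal.continuous_ofReal.comp_upperSemicontinuous husc
    ENNReal.ofReal_mono, ?_, ?_⟩
  · obtain rfl : b = 1 - a := by linarith
    rw [ENNReal.ofReal_rpow_of_nonneg (h0 x) ha.le, ENNReal.ofReal_rpow_of_nonneg (h0 y) hb.le,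
      ← ENNReal.ofReal_mul (Real.rpow_nonneg (h0 x) _)]
    exact ENNReal.ofReal_le_ofReal (hlog x y a ha (by linarith))
  · rw [← ofReal_integral_eq_lintegral_ofReal hint (.of_forall h0)]
    exact (ENNReal.ofReal_pos.2 hpos).ne'
  · rw [← ofReal_integral_eq_lintegral_ofReal hint (.of_forall h0)]
    exact ENNReal.ofReal_ne_top

lemma lpNorm_nonneg (hf : MemQ0 f) {p : ℝ} : 0 ≤ lpNorm p f :=
  Real.rpow_nonneg (integral_nonneg fun x => Real.rpow_nonneg (hf.1 x) p) _

lemma ofReal_lpNorm (hf : MemQ0 f) {p : ℝ} (hp : 1 ≤ p) :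
    ENNReal.ofReal (lpNorm p f) = (∫⁻ x, ENNReal.ofReal (f x) ^ p) ^ (1 / p) := by
  have hpow : ∀ x, ENNReal.ofReal (f x ^ p) = ENNReal.ofReal (f x) ^ p := fun x =>
    (ENNReal.ofReal_rpow_of_nonneg (hf.1 x) (by linarith)).symm
  have hpos : ∀ x, 0 ≤ f x ^ p := fun x => Real.rpow_nonneg (hf.1 x) p
  have hmeas : Measurable f := hf.2.2.1.measurable
  rw [_root_.lpNorm, ← ENNReal.ofReal_rpow_of_nonneg (integral_nonneg hpos) (by positivity),
    integral_eq_lintegral_of_nonneg_ae (.of_forall hpos)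
      (hmeas.pow_const p).aestronglyMeasurable,
    lintegral_congr hpow, ENNReal.ofReal_toReal (hf.memEQ0.rpow hp).lintegral_ne_top]

lemma ofReal_projL1 (hf : MemQ0 f) {H : Submodule ℝ (Eucl n)} (hH0 : 0 < Module.finrank ℝ H)
    (hH1 : Module.finrank ℝ H < n) :
    ENNReal.ofReal (projL1 f H) = ∫⁻ y : H, shadow H (fun x => ENNReal.ofReal (f x)) y := by
  obtain ⟨M, hM, hfM⟩ := hf.memEQ0.exists_forall_le
  have hsup : ∀ y : H, ⨆ z : Hᗮ, f (y + z) =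
      (shadow H (fun x => ENNReal.ofReal (f x)) y).toReal := fun y => by
    simp only [shadow, ENNReal.toReal_iSup fun _ => ENNReal.ofReal_ne_top,
      ENNReal.toReal_ofReal (hf.1 _)]
  have hmeas : Measurable (shadow H fun x => ENNReal.ofReal (f x)) :=
    ((HasSigmaCompactSuperlevels.of_upperSemicontinuous
      hf.memEQ0.upperSemicontinuous).shadow H).measurable
  have hlt : ∀ y : H, shadow H (fun x => ENNReal.ofReal (f x)) y < ∞ := fun y =>
    (iSup_le fun _ => hfM _).trans_lt hM.lt_top
  simp only [projL1, hsup]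
  rw [integral_toReal hmeas.aemeasurable (.of_forall hlt),
    ENNReal.ofReal_toReal (hf.memEQ0.lintegral_shadow_ne_top hH0 (by simpa using hH1))]

end MemQ0

/-- **The functional Shephard problem**, `L^{n/k}`-form (Corollary 4.8, first bound). -/
theorem functional_shephard_lp (n k : ℕ) (hn : 2 ≤ n) (hk1 : 1 ≤ k) (hk2 : k ≤ n - 1)
    (f₁ f₂ : Eucl n → ℝ) (hf₁ : MemQ0 f₁) (hf₂ : MemQ0 f₂)
    (hcond : ∀ H : Submodule ℝ (Eucl n), Module.finrank ℝ H = k →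
      projL1 f₁ H ≤ projL1 f₂ H) :
    lpNorm ((n : ℝ) / k) f₁ ≤
      (16 * Real.exp 1 * Real.sqrt n) ^ (n - k) * lpNorm ((n : ℝ) / k) f₂ := by
  have hkn : k < n := by omega
  have hp : 1 ≤ (n : ℝ) / k := (one_le_div (by positivity)).2 (by exact_mod_cast hkn.le)
  have hshadow : ∀ H : Submodule ℝ (Eucl n), Module.finrank ℝ H = k →
      ∫⁻ y : H, shadow H (fun x => ENNReal.ofReal (f₁ x)) y ≤
        ∫⁻ y : H, shadow H (fun x => ENNReal.ofReal (f₂ x)) y := fun H hH => by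
    rw [← hf₁.ofReal_projL1 (by omega) (by omega), ← hf₂.ofReal_projL1 (by omega) (by omega)]
    exact ENNReal.ofReal_le_ofReal (hcond H hH)
  have hle := functional_shephard_lp_general finrank_euclideanSpace_fin hk1 hkn
    (.of_upperSemicontinuous hf₁.memEQ0.upperSemicontinuous) hf₂.memEQ0 hshadow
  rwa [← one_div_div (n : ℝ), ← hf₁.ofReal_lpNorm hp, ← hf₂.ofReal_lpNorm hp,
    ← ENNReal.ofReal_mul (by positivity),
    ENNReal.ofReal_le_ofReal_iff (mul_nonneg (by positivity) hf₂.lpNorm_nonneg)] at hle
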